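/- arXiv:1407.6258 — 2 statements merged into one kernel-verified Lean document; each statement's English description precedes it below -/
import Mathlib

section
/- Fix n ≥ 0. The map Φ sending a stable x-family f = (f_{2m+1})_{m≥0} satisfying equation (E_x) with every f_{2m+1} homogeneous of degree n to the family g = (g_m)_{m≥0} defined by g_m(y₁,…,y_m) := f_{2m+1}(0,y₁,0,y₂,0,…,0,y_m,0) (all odd-indexed variables x_{2i+1} set to 0 and x_{2i} set to y_i) is a ℚ-linear bijection from the space of such stable x-families onto the space of quasi-symmetric stable families g with every g_m homogeneous of degree n. -/
open MvPolynomial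
open scoped Classical

noncomputable section

/-- The order condition for a function `r : α → Fin N` (labels `0,…,N-1` standing for
`1,…,N`) with respect to a rank function `ht` on the poset `α`. -/
def OrderCond {α : Type} [PartialOrder α] (ht : α → ℕ) {N : ℕ} (r : α → Fin N) : Prop :=
  (∀ x y : α, x ≤ y → r x ≤ r y) ∧ ∀ x y : α, x < y → Odd (ht x) → r x < r y

/-- `ht` is a rank function on the poset `α`: minimal elements have height `0` and
covering relations increase the height by exactly one. -/
def IsRanked {α : Type} [PartialOrder α] (ht : α → ℕ) : Prop :=
  (∀ x : α, IsMin x → ht x = 0) ∧ ∀ x y : α, x ⋖ y → ht y = ht x + 1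

/-- The polynomial `N_P^(m)`, an element of `ℚ[p₁,…,p_{m+1},q₁,…,q_m]`;
the variable `Sum.inl j` is `p_{j+1}` and `Sum.inr j` is `q_{j+1}` (0-indexed). -/
def NP (α : Type) [Fintype α] [PartialOrder α] (ht : α → ℕ) (m : ℕ) :
    MvPolynomial (ℕ ⊕ ℕ) ℚ :=
  ∑ r : α → Fin (m + 1),
    if OrderCond ht r ∧ ∀ v, Odd (ht v) → (r v : ℕ) < m then
      ∏ v : α, if Even (ht v) then X (Sum.inl (r v : ℕ)) else X (Sum.inr (r v : ℕ))
    else 0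

/-- The polynomial `F_P^(N)`, an element of `ℚ[x₁,…,x_N]`; variable `j` is `x_{j+1}`. -/
def FP (α : Type) [Fintype α] [PartialOrder α] (ht : α → ℕ) (N : ℕ) :
    MvPolynomial ℕ ℚ :=
  ∑ r : α → Fin N, if OrderCond ht r then ∏ v : α, X (r v : ℕ) else 0

/-- A stable x-family `(f_{2m+1})_{m ≥ 0}`: `f m` stands for `f_{2m+1} ∈ ℚ[x₁,…,x_{2m+1}]`
(variable `k` is `x_{k+1}`), with `f_{2m+3}(x₁,…,x_{2m+1},0,0) = f_{2m+1}`. -/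
def IsStableX (f : ℕ → MvPolynomial ℕ ℚ) : Prop :=
  (∀ m, (f m).vars ⊆ Finset.range (2 * m + 1)) ∧
  ∀ m, aeval (fun k => if k < 2 * m + 1 then (X k : MvPolynomial ℕ ℚ) else 0) (f (m + 1)) = f m

/-- Equation (E_x): for all (paper) `m ≥ 1` and `1 ≤ i ≤ 2m`, substituting `x_{i+1} := x_i`
in `f_{2m+1}` yields `f_{2m-1}(x₁,…,x_{i-1},x_{i+2},…,x_{2m+1})`.  Here `m, i` are 0-indexed:
`f (m+1)` is `f_{2m+3}` and the Lean variable `i` is the paper variable `i+1`. -/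
def SatisfiesEx (f : ℕ → MvPolynomial ℕ ℚ) : Prop :=
  ∀ m i : ℕ, i < 2 * m + 2 →
    aeval (fun k => if k = i + 1 then (X i : MvPolynomial ℕ ℚ) else X k) (f (m + 1)) =
    aeval (fun k => if k < i then (X k : MvPolynomial ℕ ℚ) else X (k + 2)) (f m)

/-- A stable pq-family `(h_m)_{m ≥ 0}` with `h m ∈ ℚ[p₁,…,p_{m+1},q₁,…,q_m]`
(`Sum.inl j` is `p_{j+1}`, `Sum.inr j` is `q_{j+1}`), such that substituting
`p_{m+2} := 0` and `q_{m+1} := 0` in `h (m+1)` yields `h m`. -/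
def IsStablePQ (h : ℕ → MvPolynomial (ℕ ⊕ ℕ) ℚ) : Prop :=
  (∀ m, (h m).vars ⊆ (Finset.range (m + 1)).image Sum.inl ∪ (Finset.range m).image Sum.inr) ∧
  ∀ m, aeval (Sum.elim
      (fun j => if j = m + 1 then 0 else (X (Sum.inl j) : MvPolynomial (ℕ ⊕ ℕ) ℚ))
      (fun j => if j = m then 0 else X (Sum.inr j))) (h (m + 1)) = h m

/-- Equations (E_pq) for a pq-family; the Lean index `i ≤ m` is the paper index `i+1 ≤ m+1`
and `h (m+1)`, `h m` are the paper `h_m`, `h_{m-1}`.  The first equation sets `q_{i+1} := 0`,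
the second sets `p_{i+1} := 0`. -/
def SatisfiesEpq (h : ℕ → MvPolynomial (ℕ ⊕ ℕ) ℚ) : Prop :=
  ∀ m i : ℕ, i ≤ m →
    (aeval (Sum.elim (fun j => (X (Sum.inl j) : MvPolynomial (ℕ ⊕ ℕ) ℚ))
        (fun j => if j = i then 0 else X (Sum.inr j))) (h (m + 1)) =
      aeval (Sum.elim
        (fun j => if j < i then (X (Sum.inl j) : MvPolynomial (ℕ ⊕ ℕ) ℚ)
          else if j = i then X (Sum.inl i) + X (Sum.inl (i + 1)) else X (Sum.inl (j + 1)))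
        (fun j => if j < i then X (Sum.inr j) else X (Sum.inr (j + 1)))) (h m)) ∧
    (aeval (Sum.elim (fun j => if j = i then 0 else (X (Sum.inl j) : MvPolynomial (ℕ ⊕ ℕ) ℚ))
        (fun j => X (Sum.inr j))) (h (m + 1)) =
      aeval (Sum.elim
        (fun j => if j < i then (X (Sum.inl j) : MvPolynomial (ℕ ⊕ ℕ) ℚ)
          else X (Sum.inl (j + 1)))
        (fun j => if j + 1 < i then X (Sum.inr j)
          else if j + 1 = i then X (Sum.inr j) + X (Sum.inr (j + 1))
          else X (Sum.inr (j + 1)))) (h m))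

/-- The inverse substitution of (⋆): the x-variable of (0-indexed) Lean index `k`
(paper `x_{k+1}`) expressed in the `p`/`q` variables:
`x_{2i+1} = q_{i+1}+⋯+q_m+p_{i+1}+⋯+p_{m+1}` and `x_{2i} = q_i+⋯+q_m+p_{i+1}+⋯+p_{m+1}`. -/
def xToPQ (m k : ℕ) : MvPolynomial (ℕ ⊕ ℕ) ℚ :=
  if k % 2 = 0 then
    (∑ j ∈ Finset.Ico (k / 2) m, X (Sum.inr j)) + ∑ j ∈ Finset.Ico (k / 2) (m + 1), X (Sum.inl j)
  else
    (∑ j ∈ Finset.Ico (k / 2) m, X (Sum.inr j)) +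
      ∑ j ∈ Finset.Ico (k / 2 + 1) (m + 1), X (Sum.inl j)

/-- The substitution (⋆): `p_i := x_{2i-1} - x_{2i}` (`1 ≤ i ≤ m`),
`q_i := x_{2i} - x_{2i+1}` (`1 ≤ i ≤ m`), `p_{m+1} := x_{2m+1}` (all 0-indexed in Lean). -/
def pqToX (m : ℕ) : ℕ ⊕ ℕ → MvPolynomial ℕ ℚ :=
  Sum.elim (fun j => if j = m then X (2 * m) else X (2 * j) - X (2 * j + 1))
    (fun j => X (2 * j + 1) - X (2 * j + 2))

/-- The substitution sending every odd-indexed (paper) variable `x_{2i+1}` to `0`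
and `x_{2i}` to `y_i` (Lean variable `i-1`). -/
def oddZero : ℕ → MvPolynomial ℕ ℚ := fun k => if k % 2 = 0 then 0 else X (k / 2)

/-- A quasi-symmetric stable family `(g_m)_{m≥0}` with `g m ∈ ℚ[y₁,…,y_m]`
(variable `k` is `y_{k+1}`): `g_{m+1}(y₁,…,y_m,0) = g_m`, and the coefficient of
`y_{a₁}^{c₁}⋯y_{a_r}^{c_r}` (for `a₁ < ⋯ < a_r ≤ m`, `c_j > 0`) equals the coefficient
of `y₁^{c₁}⋯y_r^{c_r}`. -/
def IsQSymStable (g : ℕ → MvPolynomial ℕ ℚ) : Prop :=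
  (∀ m, (g m).vars ⊆ Finset.range m) ∧
  (∀ m, aeval (fun k => if k = m then 0 else (X k : MvPolynomial ℕ ℚ)) (g (m + 1)) = g m) ∧
  ∀ (m r : ℕ) (a c : Fin r → ℕ), StrictMono a → (∀ j, a j < m) → (∀ j, 0 < c j) →
    coeff (∑ j, Finsupp.single (a j) (c j)) (g m) =
    coeff (∑ j : Fin r, Finsupp.single (j : ℕ) (c j)) (g m)

/-! A letter `t` acts on functions on words (finite lists of arguments) by prepending it. If such a
function ignores zero letters and is polynomial of degree at most `n` in its letters, then its
alternating sum over the subwords of a block of `n + 1` letters vanishes, because every monomial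
misses one of these letters. Hence `(1 - t) ^ (n + 1)` acts by zero in every context, and
`t⁻¹ = ∑ j ≤ n, (-1) ^ j * (n + 1).choose (j + 1) * t ^ j`.

By (E_x), two equal neighbouring arguments of an x-family cancel, so its odd-numbered arguments act
as the inverses of its even-numbered ones: `f_{2m+1}(x₁, x₂, x₃, …)` is the value of `g = Φ f` at
the virtual word `x₁⁻¹ x₂ x₃⁻¹ ⋯`. Expanding the inverses determines `f` from `g`. Conversely, the
quasi-symmetric stable families are exactly those whose evaluation on words ignores zero letters, so
the same expansion extends every such `g` to an x-family. -/

section WordFunctions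

variable {α M : Type*} [AddCommGroup M]

/-- The coefficients of the expansion `t⁻¹ = ∑ j, invCoeff n j * t ^ j`, valid whenever
`(1 - t) ^ (n + 1) = 0`. -/
def invCoeff (n j : ℕ) : ℤ := (-1) ^ j * (n + 1).choose (j + 1)

/-- The action of a letter on functions on words. -/
def consLetter (t : α) (F : List α → M) : List α → M := fun l => F (t :: l)

/-- The action of the inverse of a letter on functions on words; it is inverse to `consLetter t`
on the functions satisfying `IsUnipotent n`. -/
def consInv (n : ℕ) (t : α) (F : List α → M) : List α → M :=
  fun l => ∑ j ∈ Finset.range (n + 1), invCoeff n j • F (List.replicate j t ++ l)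

/-- The function `F` acted on by `u 0, …, u (N - 1)`, the letters of even index acting through
their inverses; its value at `[]` is `F` at the virtual word `(u 0)⁻¹ (u 1) (u 2)⁻¹ ⋯`. -/
def altAction (n : ℕ) (F : List α → M) (u : ℕ → α) : ℕ → List α → M
  | 0 => F
  | N + 1 => if Even N then consInv n (u N) (altAction n F u N)
      else consLetter (u N) (altAction n F u N)

variable {n : ℕ} {F : List α → M}

lemma altAction_congr {u v : ℕ → α} {N : ℕ} (h : ∀ k < N, u k = v k) :
    altAction n F u N = altAction n F v N := by
  induction N with
  | zero => rfl
  | succ N ih => rw [altAction, altAction, ih fun k hk => h k (by omega), h N (by omega)]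

lemma map_altAction {β M' : Type*} [AddCommGroup M'] (φ : M →+ M') (ψ : α → β)
    {F' : List β → M'} (h : ∀ l, φ (F l) = F' (l.map ψ)) (u : ℕ → α) (N : ℕ) (l : List α) :
    φ (altAction n F u N l) = altAction n F' (ψ ∘ u) N (l.map ψ) := by
  induction N generalizing l with
  | zero => exact h l
  | succ N ih =>
    rw [altAction, altAction]
    split_ifs <;> simp [consInv, consLetter, ih]

lemma altAction_mem {A : Set α} {B : AddSubgroup M} (hF : ∀ l : List α, (∀ x ∈ l, x ∈ A) → F l ∈ B)
    {u : ℕ → α} {N : ℕ} (hu : ∀ k < N, u k ∈ A) {l : List α} (hl : ∀ x ∈ l, x ∈ A) :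
    altAction n F u N l ∈ B := by
  induction N generalizing l with
  | zero => exact hF l hl
  | succ N ih =>
    have hN : u N ∈ A := hu N (by omega)
    have ih' : ∀ l, (∀ x ∈ l, x ∈ A) → altAction n F u N l ∈ B :=
      fun l => ih fun k hk => hu k (by omega)
    rw [altAction]
    split_ifs
    · refine sum_mem fun j _ => zsmul_mem (ih' _ fun x hx => ?_) _
      rcases List.mem_append.1 hx with hx | hx
      · exact List.eq_of_mem_replicate hx ▸ hN
      · exact hl x hx
    · exact ih' _ (List.forall_mem_cons.2 ⟨hN, hl⟩)

variable [Zero α]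

/-- A function on words that ignores the letter `0` and on which every letter `t` acts
unipotently: inside every context `a`, `b`, the operator `(1 - t) ^ (n + 1)` vanishes. -/
structure IsUnipotent (n : ℕ) (F : List α → M) : Prop where
  erase_zero : ∀ a b, F (a ++ 0 :: b) = F (a ++ b)
  sum_replicate : ∀ a t b, ∑ k ∈ Finset.range (n + 2),
    ((-1) ^ k * (n + 1).choose k : ℤ) • F (a ++ (List.replicate k t ++ b)) = 0

namespace IsUnipotent

lemma eq_sum_invCoeff_smul (hF : IsUnipotent n F) (a b : List α) (t : α) :
    F (a ++ b) =
      ∑ j ∈ Finset.range (n + 1), invCoeff n j • F (a ++ (List.replicate (j + 1) t ++ b)) := by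
  have h := hF.sum_replicate a t b
  rw [Finset.sum_range_succ'] at h
  simp only [pow_succ, mul_neg_one, neg_mul, neg_smul, Finset.sum_neg_distrib] at h
  exact (neg_add_eq_zero.1 (by simpa [invCoeff] using h)).symm

lemma isUnipotent_consLetter (hF : IsUnipotent n F) (t : α) :
    IsUnipotent n (consLetter t F) where
  erase_zero a b := hF.erase_zero (t :: a) b
  sum_replicate a := hF.sum_replicate (t :: a)

lemma isUnipotent_consInv (hF : IsUnipotent n F) (t : α) : IsUnipotent n (consInv n t F) where
  erase_zero a b := by
    simp only [consInv, ← List.append_assoc, hF.erase_zero]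
  sum_replicate a s b := by
    simp only [consInv, Finset.smul_sum]
    rw [Finset.sum_comm]
    refine Finset.sum_eq_zero fun j _ => ?_
    simp only [smul_comm _ (invCoeff n j), ← Finset.smul_sum]
    rw [← smul_zero (invCoeff n j), ← hF.sum_replicate (List.replicate j t ++ a) s b]
    simp only [List.append_assoc]

lemma consInv_consLetter (hF : IsUnipotent n F) (t : α) : consInv n t (consLetter t F) = F :=
  funext fun l => (hF.eq_sum_invCoeff_smul [] l t).symm

lemma consLetter_consInv (hF : IsUnipotent n F) (t : α) : consLetter t (consInv n t F) = F := by
  funext l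
  refine Eq.trans ?_ (hF.eq_sum_invCoeff_smul [] l t).symm
  simp only [consLetter, consInv, List.nil_append, List.replicate_succ', List.append_assoc,
    List.singleton_append]

lemma consLetter_zero (hF : IsUnipotent n F) : consLetter 0 F = F :=
  funext fun l => hF.erase_zero [] l

lemma consInv_zero (hF : IsUnipotent n F) : consInv n 0 F = F := by
  conv_lhs => rw [← hF.consLetter_zero]
  exact hF.consInv_consLetter 0

lemma isUnipotent_altAction (hF : IsUnipotent n F) (u : ℕ → α) (N : ℕ) :
    IsUnipotent n (altAction n F u N) := by
  induction N with
  | zero => exact hF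
  | succ N ih =>
    rw [altAction]
    split_ifs
    · exact ih.isUnipotent_consInv _
    · exact ih.isUnipotent_consLetter _

lemma altAction_cancel (hF : IsUnipotent n F) {u v : ℕ → α} {i N : ℕ} (hN : i ≤ N)
    (hi : u (i + 1) = u i) (hlt : ∀ k < i, v k = u k) (hge : ∀ k, i ≤ k → v k = u (k + 2)) :
    altAction n F u (N + 2) = altAction n F v N := by
  induction N, hN using Nat.le_induction with
  | base =>
    rw [altAction_congr hlt, altAction, altAction, hi]
    by_cases h : Even i
    · rw [if_pos h, if_neg (by simpa [Nat.even_add_one] using h),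
        (hF.isUnipotent_altAction u i).consLetter_consInv]
    · rw [if_neg h, if_pos (by simpa [Nat.even_add_one] using h),
        (hF.isUnipotent_altAction u i).consInv_consLetter]
  | succ N hN ih =>
    rw [altAction, ih, altAction, hge N hN]
    simp only [Nat.even_add, even_two, iff_true]

lemma altAction_add_two_of_eq_zero (hF : IsUnipotent n F) {u : ℕ → α} {N : ℕ}
    (h₀ : u N = 0) (h₁ : u (N + 1) = 0) : altAction n F u (N + 2) = altAction n F u N := by
  have h := hF.isUnipotent_altAction u N
  rw [altAction, altAction, h₀, h₁]
  split_ifs <;> simp only [h.consInv_zero, h.consLetter_zero]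

end IsUnipotent

end WordFunctions

section Polynomiality

lemma sum_neg_one_pow_mul_eval_piecewise_eq_zero {σ R : Type*} [Fintype σ] [DecidableEq σ]
    [CommRing R] {p : MvPolynomial σ R} (hp : p.totalDegree < Fintype.card σ) (x y : σ → R) :
    ∑ S : Finset σ, (-1) ^ S.card * eval (S.piecewise x y) p = 0 := by
  simp only [eval_eq', Finset.mul_sum]
  rw [Finset.sum_comm]
  refine Finset.sum_eq_zero fun d hd => ?_
  obtain ⟨i, hi⟩ : ∃ i, d i = 0 := by
    by_contra! h
    have hle : Fintype.card σ ≤ d.degree := by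
      rw [Finsupp.degree_eq_sum, Fintype.card_eq_sum_ones]
      exact Finset.sum_le_sum fun i _ => Nat.one_le_iff_ne_zero.2 (h i)
    exact absurd (hle.trans (le_totalDegree hd)) hp.not_ge
  have hprod : ∏ i, (y i ^ d i - x i ^ d i) = 0 :=
    Finset.prod_eq_zero (Finset.mem_univ i) (by simp [hi])
  rw [Finset.prod_sub, Finset.powerset_univ] at hprod
  rw [← mul_zero (coeff d p), ← hprod, Finset.mul_sum]
  refine Finset.sum_congr rfl fun S _ => ?_
  have hS : ∏ j, S.piecewise x y j ^ d j =
      ∏ j, S.piecewise (fun j => x j ^ d j) (fun j => y j ^ d j) j :=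
    Finset.prod_congr rfl fun j _ => by by_cases hj : j ∈ S <;> simp [hj]
  rw [hS, Finset.prod_piecewise, Finset.univ_inter]
  ring

lemma apply_map_eq_apply_map_filter {ι α M : Type*} [Zero α] {F : List α → M}
    (hF : ∀ a b, F (a ++ 0 :: b) = F (a ++ b)) {P : ι → Prop} [DecidablePred P]
    {θ : ι → α} (hθ : ∀ k, ¬ P k → θ k = 0) (l : List ι) (a b : List α) :
    F (a ++ (l.map θ ++ b)) = F (a ++ ((l.filter P).map θ ++ b)) := by
  induction l generalizing a with
  | nil => rfl
  | cons k l ih =>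
    by_cases hk : P k
    · simpa [List.filter_cons, hk] using ih (a ++ [θ k])
    · simpa [List.filter_cons, hk, hθ k hk, hF] using ih a

lemma map_filter_piecewise_eq_replicate {α : Type*} {N : ℕ} (S : Finset (Fin N)) (t : α)
    (y : Fin N → α) :
    ((List.finRange N).filter (· ∈ S)).map (S.piecewise (fun _ => t) y) =
      List.replicate S.card t := by
  refine List.eq_replicate_iff.2 ⟨?_, fun x hx => ?_⟩
  · rw [List.length_map, ← List.toFinset_card_of_nodup ((List.nodup_finRange N).filter _)]
    congr 1
    ext k
    simp
  · obtain ⟨k, hk, rfl⟩ := List.mem_map.1 hx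
    exact S.piecewise_eq_of_mem _ _ (by simpa using hk)

lemma IsUnipotent.of_polynomial {R : Type*} [CommRing R] {n : ℕ} {F : List R → R}
    (hF : ∀ a b, F (a ++ 0 :: b) = F (a ++ b))
    (hpoly : ∀ a b, ∃ p : MvPolynomial (Fin (n + 1)) R,
      p.totalDegree ≤ n ∧ ∀ x, eval x p = F (a ++ (List.ofFn x ++ b))) :
    IsUnipotent n F where
  erase_zero := hF
  sum_replicate a t b := by
    obtain ⟨p, hdeg, hp⟩ := hpoly a b
    have heval (S : Finset (Fin (n + 1))) :
        eval (S.piecewise (fun _ => t) 0) p = F (a ++ (List.replicate S.card t ++ b)) := by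
      rw [hp, List.ofFn_eq_map, apply_map_eq_apply_map_filter hF (P := (· ∈ S))
        (fun k hk => S.piecewise_eq_of_notMem _ _ hk), map_filter_piecewise_eq_replicate]
    have hsum := sum_neg_one_pow_mul_eval_piecewise_eq_zero (p := p)
      (by simpa using Nat.lt_succ_of_le hdeg) (fun _ => t) 0
    simp only [heval] at hsum
    rw [← Finset.powerset_univ,
      Finset.sum_powerset_apply_card fun k => (-1) ^ k * F (a ++ (List.replicate k t ++ b))] at hsum
    simpa [mul_assoc, mul_left_comm] using hsum

end Polynomiality

section Substitution

variable {σ τ K A : Type*} [CommSemiring K] [CommSemiring A] [Algebra K A]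

lemma aeval_congr_vars {p : MvPolynomial σ K} {u v : σ → A} (h : ∀ k ∈ p.vars, u k = v k) :
    aeval u p = aeval v p :=
  eval₂Hom_congr' rfl (fun i hi _ => h i hi) rfl

lemma totalDegree_aeval_le (p : MvPolynomial σ K) {u : σ → MvPolynomial τ A}
    (hu : ∀ k, (u k).totalDegree ≤ 1) : (aeval u p).totalDegree ≤ p.totalDegree := by
  rw [aeval_def, eval₂_eq]
  refine totalDegree_finsetSum_le fun d hd => (totalDegree_mul _ _).trans ?_
  rw [IsScalarTower.algebraMap_apply K A, algebraMap_eq, totalDegree_C, zero_add]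
  refine (totalDegree_finsetProd _ _).trans ((Finset.sum_le_sum fun i _ => ?_).trans
    (le_totalDegree hd))
  exact (totalDegree_pow _ _).trans (by simpa using Nat.mul_le_mul_left (d i) (hu i))

lemma killCompl_X_of_notMem_range {e : σ → τ} (he : e.Injective) {k : τ}
    (hk : k ∉ Set.range e) : killCompl he (X k : MvPolynomial τ K) = 0 := by
  rw [killCompl, aeval_X, dif_neg hk]

lemma killCompl_X_apply {e : σ → τ} (he : e.Injective) (j : σ) :
    killCompl he (X (e j) : MvPolynomial τ K) = X j := by
  rw [← rename_X, killCompl_rename_app]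

lemma aeval_killCompl {e : σ → τ} (he : e.Injective) {u : τ → A}
    (hu : ∀ k, k ∉ Set.range e → u k = 0) (p : MvPolynomial τ K) :
    aeval (u ∘ e) (killCompl he p) = aeval u p := by
  rw [← AlgHom.comp_apply]
  congr 1
  ext k
  by_cases hk : k ∈ Set.range e
  · obtain ⟨j, rfl⟩ := hk
    simp [killCompl_X_apply]
  · simp [killCompl_X_of_notMem_range he hk, hu k hk]

lemma getD_of_forall_mem {α : Type*} {P : α → Prop} {l : List α} {a : α} (hl : ∀ x ∈ l, P x)
    (ha : P a) (k : ℕ) : P (l.getD k a) := by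
  rcases lt_or_ge k l.length with h | h
  · rw [List.getD_eq_getElem _ _ h]
    exact hl _ (List.getElem_mem h)
  · rwa [List.getD_eq_default _ _ h]

end Substitution

section EvalList

variable {R S : Type*} [CommRing R] [Algebra ℚ R] [CommRing S] [Algebra ℚ S]

/-- The value of the family of polynomials `p` on a finite word `l` of arguments: the member of
index `l.length` evaluated at the letters of `l` followed by zeros. -/
def evalList (p : ℕ → MvPolynomial ℕ ℚ) (l : List R) : R :=
  aeval (fun k => l.getD k 0) (p l.length)

lemma map_evalList (p : ℕ → MvPolynomial ℕ ℚ) (φ : R →ₐ[ℚ] S) (l : List R) :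
    φ (evalList p l) = evalList p (l.map φ) := by
  rw [evalList, comp_aeval_apply, evalList, List.length_map]
  congr 2
  funext k
  simp only [List.getD_eq_getElem?_getD, List.getElem?_map]
  cases l[k]? <;> simp

lemma aeval_getD_map_range {p : MvPolynomial ℕ ℚ} {N : ℕ} (hp : p.vars ⊆ Finset.range N)
    (u : ℕ → R) : aeval (fun k => ((List.range N).map u).getD k 0) p = aeval u p :=
  aeval_congr_vars fun k hk => by
    have hkN : k < N := Finset.mem_range.1 (hp hk)
    simp [hkN]

lemma totalDegree_evalList_le {σ K : Type*} [CommRing K] [Algebra ℚ K] {p : ℕ → MvPolynomial ℕ ℚ}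
    {n : ℕ} (hp : ∀ m, (p m).totalDegree ≤ n) {l : List (MvPolynomial σ K)}
    (hl : ∀ q ∈ l, q.totalDegree ≤ 1) : (evalList p l).totalDegree ≤ n :=
  (totalDegree_aeval_le _ fun k => getD_of_forall_mem (P := (totalDegree · ≤ 1)) hl
    (by simp) k).trans (hp _)

lemma exists_eval_eq_evalList_map_eval {σ : Type*} {p : ℕ → MvPolynomial ℕ ℚ} {n : ℕ}
    (hp : ∀ m, (p m).totalDegree ≤ n) {l : List (MvPolynomial σ R)}
    (hl : ∀ q ∈ l, q.totalDegree ≤ 1) :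
    ∃ q : MvPolynomial σ R, q.totalDegree ≤ n ∧ ∀ x, eval x q = evalList p (l.map (eval x)) :=
  ⟨evalList p l, totalDegree_evalList_le hp hl,
    fun x => map_evalList p ((aeval x : MvPolynomial σ R →ₐ[R] R).restrictScalars ℚ) l⟩

end EvalList

section InterleaveZero

variable {α : Type*} [Zero α]

/-- The word `0, l₀, 0, l₁, …`: the arguments at which `Φ` evaluates an x-family. -/
def interleaveZero (l : List α) : List α := l.flatMap fun t => [0, t]

lemma interleaveZero_append (l l' : List α) :
    interleaveZero (l ++ l') = interleaveZero l ++ interleaveZero l' :=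
  List.flatMap_append

lemma interleaveZero_cons (t : α) (l : List α) :
    interleaveZero (t :: l) = 0 :: t :: interleaveZero l :=
  rfl

lemma length_interleaveZero (l : List α) : (interleaveZero l).length = 2 * l.length := by
  induction l with
  | nil => rfl
  | cons t l ih => simp [interleaveZero_cons, ih, mul_add]

lemma map_interleaveZero {β : Type*} [Zero β] {φ : α → β} (hφ : φ 0 = 0) (l : List α) :
    (interleaveZero l).map φ = interleaveZero (l.map φ) := by
  simp [interleaveZero, List.map_flatMap, List.flatMap_map, hφ]

lemma getD_interleaveZero (l : List α) (k : ℕ) :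
    (interleaveZero l).getD k 0 = if k % 2 = 0 then 0 else l.getD (k / 2) 0 := by
  induction l generalizing k with
  | nil => simp [interleaveZero]
  | cons t l ih =>
    rw [interleaveZero_cons]
    match k with
    | 0 => rfl
    | 1 => rfl
    | k + 2 =>
      rw [List.getD_cons_succ, List.getD_cons_succ, ih k, Nat.add_mod_right,
        Nat.add_div_right k two_pos, List.getD_cons_succ]

end InterleaveZero

section XFamilies

variable {R : Type*} [CommRing R] [Algebra ℚ R] {f : ℕ → MvPolynomial ℕ ℚ}

lemma IsStableX.aeval_eq_of_le (hf : IsStableX f) {m M : ℕ} (hM : m ≤ M) {u : ℕ → R}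
    (hu : ∀ k, 2 * m + 1 ≤ k → u k = 0) : aeval u (f M) = aeval u (f m) := by
  induction M, hM using Nat.le_induction with
  | base => rfl
  | succ M hM ih =>
    rw [← ih, ← hf.2 M, comp_aeval_apply]
    congr 2
    funext k
    split_ifs with hk
    · simp
    · rw [map_zero, hu k (by omega)]

lemma IsStableX.evalList_eq_aeval (hf : IsStableX f) {l : List R} {M : ℕ}
    (hM : l.length ≤ 2 * M + 1) : evalList f l = aeval (fun k => l.getD k 0) (f M) := by
  have hl {m : ℕ} (hm : l.length ≤ 2 * m + 1) (k : ℕ) (hk : 2 * m + 1 ≤ k) : l.getD k 0 = 0 :=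
    List.getD_eq_default _ _ (hm.trans hk)
  rcases le_total l.length M with h | h
  · exact (hf.aeval_eq_of_le h (hl (by omega))).symm
  · exact hf.aeval_eq_of_le h (hl hM)

lemma IsStableX.evalList_append_zero (hf : IsStableX f) (l : List R) :
    evalList f (l ++ [0]) = evalList f l := by
  rw [evalList, hf.evalList_eq_aeval (l := l) (M := (l ++ [0]).length) (by simp; omega)]
  congr 2
  funext k
  rcases lt_or_ge k l.length with h | h
  · rw [List.getD_append _ _ _ _ h]
  · rw [List.getD_append_right _ _ _ _ h, List.getD_eq_default _ _ h]
    cases k - l.length <;> simp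

lemma SatisfiesEx.evalList_cancel (hE : SatisfiesEx f) (hf : IsStableX f) (a b : List R) (t : R) :
    evalList f (a ++ t :: t :: b) = evalList f (a ++ b) := by
  rw [hf.evalList_eq_aeval (M := a.length + b.length + 1) (by simp; omega),
    hf.evalList_eq_aeval (M := a.length + b.length) (by simp; omega)]
  have h := congrArg (aeval (fun k => (a ++ t :: t :: b).getD k 0) : MvPolynomial ℕ ℚ →ₐ[ℚ] R)
    (hE (a.length + b.length) a.length (by omega))
  rw [comp_aeval_apply, comp_aeval_apply] at h
  refine Eq.trans ?_ (h.trans ?_)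
  · congr 2
    funext k
    split_ifs with hk <;> simp [hk]
  · congr 2
    funext k
    split_ifs with hk
    · simp [List.getElem?_append, hk]
    · rw [aeval_X, List.getD_append_right _ _ _ _ (by omega),
        List.getD_append_right _ _ _ _ (by omega),
        show k + 2 - a.length = k - a.length + 1 + 1 by omega]
      rfl

lemma IsStableX.evalList_interleaveZero (hf : IsStableX f) (l : List R) :
    evalList f (interleaveZero l) = evalList (fun m => aeval oddZero (f m)) l := by
  rw [hf.evalList_eq_aeval (M := l.length) (by rw [length_interleaveZero]; omega), evalList,
    comp_aeval_apply]
  congr 2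
  funext k
  rw [getD_interleaveZero, oddZero]
  split_ifs <;> simp

variable [Nontrivial R] {n : ℕ}

lemma SatisfiesEx.isUnipotent_evalList_interleaveZero (hE : SatisfiesEx f) (hf : IsStableX f)
    (hn : ∀ m, (f m).totalDegree ≤ n) (A B : List R) :
    IsUnipotent n fun l => evalList f (A ++ (interleaveZero l ++ B)) := by
  refine .of_polynomial (fun a b => ?_) fun a b => ?_
  · simpa [interleaveZero_append, interleaveZero_cons] using
      hE.evalList_cancel hf (A ++ interleaveZero a) (interleaveZero b ++ B) 0
  · let w : List (MvPolynomial (Fin (n + 1)) R) := A.map C ++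
      (interleaveZero (a.map C ++ (List.ofFn X ++ b.map C)) ++ B.map C)
    have hw : ∀ q ∈ w, q.totalDegree ≤ 1 := by
      simp only [w, interleaveZero, List.mem_append, List.mem_flatMap, List.mem_map, List.mem_ofFn,
        List.mem_cons, List.not_mem_nil, or_false]
      rintro q
        (⟨x, -, rfl⟩ | ⟨_, ⟨x, -, rfl⟩ | ⟨i, rfl⟩ | ⟨x, -, rfl⟩, rfl | rfl⟩ | ⟨x, -, rfl⟩) <;> simp
    obtain ⟨q, hq, heval⟩ := exists_eval_eq_evalList_map_eval hn hw
    refine ⟨q, hq, fun x => ?_⟩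
    rw [heval]
    simp [w, map_interleaveZero, Function.comp_def, List.map_ofFn]

lemma SatisfiesEx.evalList_append_cons (hE : SatisfiesEx f) (hf : IsStableX f)
    (hn : ∀ m, (f m).totalDegree ≤ n) (a b : List R) (t : R) :
    evalList f (a ++ t :: b) = ∑ j ∈ Finset.range (n + 1),
      invCoeff n j • evalList f (a ++ (interleaveZero (List.replicate j t) ++ 0 :: b)) := by
  have hcancel (j : ℕ) : evalList f (a ++ (interleaveZero (List.replicate (j + 1) t) ++ t :: b)) =
      evalList f (a ++ (interleaveZero (List.replicate j t) ++ 0 :: b)) := by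
    have h := hE.evalList_cancel hf (a ++ (interleaveZero (List.replicate j t) ++ [0])) b t
    simp only [List.append_assoc, List.singleton_append] at h
    rw [List.replicate_succ', interleaveZero_append, List.append_assoc, ← h]
    rfl
  have h := (hE.isUnipotent_evalList_interleaveZero hf hn a (t :: b)).eq_sum_invCoeff_smul [] [] t
  simp only [List.append_nil, List.nil_append, hcancel] at h
  exact h

lemma evalList_interleaveZero_append_eq {f' : ℕ → MvPolynomial ℕ ℚ} (hf : IsStableX f)
    (hE : SatisfiesEx f) (hn : ∀ m, (f m).totalDegree ≤ n) (hf' : IsStableX f')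
    (hE' : SatisfiesEx f') (hn' : ∀ m, (f' m).totalDegree ≤ n)
    (h : (fun m => aeval oddZero (f m)) = fun m => aeval oddZero (f' m)) (l b : List R) :
    evalList f (interleaveZero l ++ b) = evalList f' (interleaveZero l ++ b) := by
  have hnil (l : List R) : evalList f (interleaveZero l) = evalList f' (interleaveZero l) := by
    rw [hf.evalList_interleaveZero, hf'.evalList_interleaveZero, h]
  induction b using List.twoStepInduction generalizing l with
  | nil => simpa using hnil l
  | singleton t =>
    rw [hE.evalList_append_cons hf hn, hE'.evalList_append_cons hf' hn']
    refine Finset.sum_congr rfl fun j _ => ?_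
    rw [← List.append_assoc, ← interleaveZero_append, hf.evalList_append_zero,
      hf'.evalList_append_zero, hnil]
  | cons_cons t s b ih =>
    rw [hE.evalList_append_cons hf hn, hE'.evalList_append_cons hf' hn']
    refine Finset.sum_congr rfl fun j _ => ?_
    have := ih (l ++ (List.replicate j t ++ [s]))
    simp only [interleaveZero_append, List.append_assoc] at this
    exact congrArg _ this

lemma IsStableX.evalList_map_X_range (hf : IsStableX f) (m : ℕ) :
    evalList f ((List.range (2 * m + 1)).map X) = f m := by
  rw [hf.evalList_eq_aeval (M := m) (by simp), aeval_getD_map_range (hf.1 m), aeval_X_left_apply]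

theorem eq_of_aeval_oddZero_eq {f' : ℕ → MvPolynomial ℕ ℚ} (hf : IsStableX f)
    (hE : SatisfiesEx f) (hn : ∀ m, (f m).totalDegree ≤ n) (hf' : IsStableX f')
    (hE' : SatisfiesEx f') (hn' : ∀ m, (f' m).totalDegree ≤ n)
    (h : (fun m => aeval oddZero (f m)) = fun m => aeval oddZero (f' m)) : f = f' :=
  funext fun m => by
    rw [← hf.evalList_map_X_range m, ← hf'.evalList_map_X_range m]
    exact evalList_interleaveZero_append_eq hf hE hn hf' hE' hn' h [] _

end XFamilies

section QuasiSymmetric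

lemma filter_mem_range_eq_ofFn {r m : ℕ} {a : Fin r → ℕ} (ha : StrictMono a) (hm : ∀ j, a j < m) :
    (List.range m).filter (· ∈ Set.range a) = List.ofFn a := by
  refine List.Perm.eq_of_pairwise (le := (· < ·)) (fun x y _ _ hxy hyx => absurd hxy hyx.asymm)
    (List.pairwise_lt_range.filter _) (List.pairwise_ofFn.2 fun _ _ hij => ha hij) ?_
  rw [List.perm_ext_iff_of_nodup (List.nodup_range.filter _) (List.nodup_ofFn.2 ha.injective)]
  intro k
  simp only [List.mem_filter, List.mem_range, decide_eq_true_eq, List.mem_ofFn, Set.mem_range,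
    and_iff_right_iff_imp]
  rintro ⟨j, rfl⟩
  exact hm j

lemma le_of_injective_of_forall_lt {r m : ℕ} {a : Fin r → ℕ} (ha : a.Injective)
    (hm : ∀ j, a j < m) : r ≤ m := by
  simpa using Fintype.card_le_of_injective (fun j => (⟨a j, hm j⟩ : Fin m))
    fun i j hij => ha (Fin.ext_iff.1 hij)

lemma sum_single_eq_mapDomain {ι κ : Type*} [Fintype ι] (a : ι → κ) (c : ι → ℕ) :
    ∑ j, Finsupp.single (a j) (c j) = (Finsupp.equivFunOnFinite.symm c).mapDomain a := by
  rw [Finsupp.mapDomain, Finsupp.sum_fintype _ _ (by simp)]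
  rfl

variable {g : ℕ → MvPolynomial ℕ ℚ}

lemma evalList_map_range {R : Type*} [CommRing R] [Algebra ℚ R]
    (hvars : ∀ m, (g m).vars ⊆ Finset.range m) (u : ℕ → R) (m : ℕ) :
    evalList g ((List.range m).map u) = aeval u (g m) := by
  simpa [evalList] using aeval_getD_map_range (hvars m) u

lemma killCompl_eq_evalList_ofFn_X (hvars : ∀ m, (g m).vars ⊆ Finset.range m) {r m : ℕ}
    (h : ∀ l l' : List (MvPolynomial (Fin r) ℚ), evalList g (l ++ 0 :: l') = evalList g (l ++ l'))
    {a : Fin r → ℕ} (ha : StrictMono a) (hm : ∀ j, a j < m) :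
    killCompl ha.injective (g m) = evalList g (List.ofFn X) := by
  let θ (k : ℕ) : MvPolynomial (Fin r) ℚ := killCompl ha.injective (X k)
  have hfilter := apply_map_eq_apply_map_filter h (P := (· ∈ Set.range a)) (θ := θ)
    (fun k hk => killCompl_X_of_notMem_range ha.injective hk) (List.range m) [] []
  have hθ : θ ∘ a = X := funext (killCompl_X_apply ha.injective)
  rw [filter_mem_range_eq_ofFn ha hm, List.map_ofFn, hθ] at hfilter
  simp only [List.nil_append, List.append_nil] at hfilter
  rw [← hfilter, evalList_map_range hvars, aeval_unique (killCompl ha.injective)]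
  rfl

theorem isQSymStable_of_evalList_append_zero_cons (hvars : ∀ m, (g m).vars ⊆ Finset.range m)
    (h : ∀ (R : Type) [CommRing R] [Algebra ℚ R] (l l' : List R),
      evalList g (l ++ 0 :: l') = evalList g (l ++ l')) : IsQSymStable g := by
  refine ⟨hvars, fun m => ?_, fun m r a c ha hm _ => ?_⟩
  · have hX : (List.range m).map (fun k => if k = m then 0 else (X k : MvPolynomial ℕ ℚ)) =
        (List.range m).map X :=
      List.map_congr_left fun k hk => if_neg (List.mem_range.1 hk).ne
    rw [← evalList_map_range hvars, List.range_succ, List.map_append, List.map_singleton,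
      if_pos rfl, h, List.append_nil, hX, evalList_map_range hvars, aeval_X_left_apply]
  · have hrm : r ≤ m := le_of_injective_of_forall_lt ha.injective hm
    rw [sum_single_eq_mapDomain a c, sum_single_eq_mapDomain (fun j : Fin r => (j : ℕ)) c,
      ← coeff_killCompl ha.injective, ← coeff_killCompl Fin.val_injective,
      killCompl_eq_evalList_ofFn_X hvars (h _) ha hm,
      killCompl_eq_evalList_ofFn_X hvars (h _) Fin.val_strictMono fun j => j.2.trans_le hrm]

lemma IsQSymStable.coeff_sum_single_of_le (hg : IsQSymStable g) {r m : ℕ} (hr : r ≤ m)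
    (c : Fin r → ℕ) : coeff (∑ j : Fin r, Finsupp.single (j : ℕ) (c j)) (g m) =
      coeff (∑ j : Fin r, Finsupp.single (j : ℕ) (c j)) (g r) := by
  rw [sum_single_eq_mapDomain (fun j : Fin r => (j : ℕ)) c,
    ← coeff_killCompl Fin.val_injective, ← coeff_killCompl Fin.val_injective]
  congr 1
  induction m, hr using Nat.le_induction with
  | base => rfl
  | succ m hm ih =>
    rw [← ih, ← hg.2.1 m, comp_aeval_apply, aeval_unique (killCompl Fin.val_injective)]
    congr 2
    funext k
    split_ifs with hk
    · rw [map_zero]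
      exact killCompl_X_of_notMem_range _ (by rintro ⟨j, rfl⟩; omega)
    · rw [aeval_X]

lemma IsQSymStable.coeff_sum_single (hg : IsQSymStable g) {r m : ℕ} {a c : Fin r → ℕ}
    (ha : StrictMono a) (hm : ∀ j, a j < m) (hc : ∀ j, 0 < c j) :
    coeff (∑ j, Finsupp.single (a j) (c j)) (g m) =
      coeff (∑ j : Fin r, Finsupp.single (j : ℕ) (c j)) (g r) := by
  rw [hg.2.2 m r a c ha hm hc,
    hg.coeff_sum_single_of_le (le_of_injective_of_forall_lt ha.injective hm)]

lemma exists_strictMono_eq_sum_single (d : ℕ →₀ ℕ) :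
    ∃ (r : ℕ) (a : Fin r → ℕ), StrictMono a ∧ (∀ j, a j ∈ d.support) ∧
      d = ∑ j, Finsupp.single (a j) (d (a j)) := by
  let a := d.support.orderEmbOfFin rfl
  refine ⟨_, a, a.strictMono, Finset.orderEmbOfFin_mem _ _, ?_⟩
  conv_lhs => rw [← d.sum_single, Finsupp.sum, ← Finset.image_orderEmbOfFin_univ d.support rfl]
  rw [Finset.sum_image a.injective.injOn]

lemma IsQSymStable.coeff_mapDomain (hg : IsQSymStable g) {e : ℕ → ℕ} (he : StrictMono e) {m M : ℕ}
    {d : ℕ →₀ ℕ} (hm : ∀ k ∈ d.support, k < m) (hM : ∀ k ∈ d.support, e k < M) :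
    coeff (d.mapDomain e) (g M) = coeff d (g m) := by
  obtain ⟨r, a, ha, hmem, hd⟩ := exists_strictMono_eq_sum_single d
  have hc (j : Fin r) : 0 < d (a j) := Nat.pos_of_ne_zero (Finsupp.mem_support_iff.1 (hmem j))
  have hde : d.mapDomain e = ∑ j, Finsupp.single ((e ∘ a) j) (d (a j)) := by
    conv_lhs => rw [hd, Finsupp.mapDomain_finsetSum]
    simp only [Finsupp.mapDomain_single, Function.comp_apply]
  rw [hde, hg.coeff_sum_single (he.comp ha) (fun j => hM _ (hmem j)) hc,
    ← hg.coeff_sum_single ha (fun j => hm _ (hmem j)) hc, ← hd]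

lemma IsQSymStable.killCompl_eq (hg : IsQSymStable g) {e : ℕ → ℕ} (he : StrictMono e) {m M : ℕ}
    (h : ∀ k, e k < M ↔ k < m) : killCompl he.injective (g M) = g m := by
  ext d
  rw [coeff_killCompl]
  by_cases hd : ∀ k ∈ d.support, k < m
  · exact hg.coeff_mapDomain he hd fun k hk => (h k).2 (hd k hk)
  push Not at hd
  obtain ⟨k, hk, hmk⟩ := hd
  rw [Finsupp.mem_support_iff] at hk
  have coeff_eq_zero {N k' : ℕ} {d' : ℕ →₀ ℕ} (hk' : d' k' ≠ 0) (hN : N ≤ k') :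
      coeff d' (g N) = 0 := by
    by_contra hne
    refine hk' (mem_support_notMem_vars_zero (mem_support_iff.2 hne) fun hv => ?_)
    exact hN.not_gt (Finset.mem_range.1 (hg.1 N hv))
  rw [coeff_eq_zero hk hmk, coeff_eq_zero (k' := e k)]
  · rwa [Finsupp.mapDomain_apply he.injective]
  · exact not_lt.1 fun hlt => hmk.not_gt ((h k).1 hlt)

variable {R : Type*} [CommRing R] [Algebra ℚ R]

lemma IsQSymStable.evalList_append_zero_cons (hg : IsQSymStable g) (a b : List R) :
    evalList g (a ++ 0 :: b) = evalList g (a ++ b) := by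
  let e (k : ℕ) : ℕ := if k < a.length then k else k + 1
  have he : StrictMono e := strictMono_nat_of_lt_succ fun k => by grind
  have hrange (k : ℕ) (hk : k ∉ Set.range e) : k = a.length := by
    by_contra hne
    rcases Nat.lt_or_gt_of_ne hne with hlt | hgt
    · exact hk ⟨k, by grind⟩
    · exact hk ⟨k - 1, by grind⟩
  have hlen (k : ℕ) : e k < (a ++ 0 :: b).length ↔ k < (a ++ b).length := by grind
  rw [evalList, evalList, ← hg.killCompl_eq he hlen, ← aeval_killCompl he.injective]
  · congr 2
    funext k
    simp only [Function.comp_apply, e]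
    split_ifs with hk
    · rw [List.getD_append _ _ _ _ hk, List.getD_append _ _ _ _ hk]
    · rw [List.getD_append_right _ _ _ _ (by omega), List.getD_append_right _ _ _ _ (by omega),
        Nat.sub_add_comm (by omega), List.getD_cons_succ]
  · intro k hk
    rw [hrange k hk]
    simp

end QuasiSymmetric

section Restriction

variable {f : ℕ → MvPolynomial ℕ ℚ}

lemma IsStableX.vars_aeval_oddZero_subset (hf : IsStableX f) (m : ℕ) :
    (aeval oddZero (f m)).vars ⊆ Finset.range m := by
  intro j hj
  obtain ⟨i, hi, hji⟩ := mem_vars_bind₁ oddZero (f m) hj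
  have hi' := Finset.mem_range.1 (hf.1 m hi)
  rw [oddZero] at hji
  split_ifs at hji with h
  · simp at hji
  · rw [vars_X, Finset.mem_singleton] at hji
    rw [Finset.mem_range]
    omega

theorem SatisfiesEx.isQSymStable_aeval_oddZero (hE : SatisfiesEx f) (hf : IsStableX f) :
    IsQSymStable fun m => aeval oddZero (f m) := by
  refine isQSymStable_of_evalList_append_zero_cons hf.vars_aeval_oddZero_subset
    fun R _ _ l l' => ?_
  simp only [← hf.evalList_interleaveZero, interleaveZero_append, interleaveZero_cons]
  exact hE.evalList_cancel hf _ _ 0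

lemma isHomogeneous_aeval_oddZero {p : MvPolynomial ℕ ℚ} {n : ℕ} (hp : p.IsHomogeneous n) :
    (aeval oddZero p).IsHomogeneous n := by
  refine one_mul n ▸ hp.aeval oddZero fun k => ?_
  rw [oddZero]
  split_ifs
  · exact isHomogeneous_zero _ _ _
  · exact isHomogeneous_X _ _

end Restriction

section Extension

variable {R : Type*} [CommRing R] [Algebra ℚ R] {g : ℕ → MvPolynomial ℕ ℚ} {n : ℕ}

lemma IsQSymStable.isUnipotent_evalList [Nontrivial R] (hg : IsQSymStable g)
    (hn : ∀ m, (g m).totalDegree ≤ n) : IsUnipotent n (evalList g : List R → R) := by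
  refine .of_polynomial hg.evalList_append_zero_cons fun a b => ?_
  let w : List (MvPolynomial (Fin (n + 1)) R) := a.map C ++ (List.ofFn X ++ b.map C)
  have hw : ∀ q ∈ w, q.totalDegree ≤ 1 := by
    simp only [w, List.mem_append, List.mem_map, List.mem_ofFn]
    rintro q (⟨x, -, rfl⟩ | ⟨i, rfl⟩ | ⟨x, -, rfl⟩) <;> simp
  obtain ⟨q, hq, heval⟩ := exists_eval_eq_evalList_map_eval hn hw
  refine ⟨q, hq, fun x => ?_⟩
  rw [heval]
  simp [w, Function.comp_def, List.map_ofFn]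

/-- The x-family inverse to the restriction `Φ`, in degree `n`: its member of index `m` is the
value of `g` at the virtual word `x₁⁻¹ x₂ x₃⁻¹ ⋯ x_{2m} x_{2m+1}⁻¹`. -/
def altFamily (n : ℕ) (g : ℕ → MvPolynomial ℕ ℚ) (m : ℕ) : MvPolynomial ℕ ℚ :=
  altAction n (evalList g) X (2 * m + 1) []

lemma aeval_altFamily (u : ℕ → R) (m : ℕ) :
    aeval u (altFamily n g m) = altAction n (evalList g) u (2 * m + 1) [] := by
  have h := map_altAction (n := n) (aeval u : MvPolynomial ℕ ℚ →ₐ[ℚ] R).toAddMonoidHom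
    (aeval u) (map_evalList g (aeval u)) X (2 * m + 1) []
  have hu : aeval u ∘ (X : ℕ → MvPolynomial ℕ ℚ) = u := funext (aeval_X u)
  rwa [hu] at h

lemma vars_altFamily_subset (n : ℕ) (g : ℕ → MvPolynomial ℕ ℚ) (m : ℕ) :
    (altFamily n g m).vars ⊆ Finset.range (2 * m + 1) := by
  let S := supported ℚ (Finset.range (2 * m + 1) : Set ℕ)
  suffices h : altFamily n g m ∈ S from Finset.coe_subset.1 (mem_supported.1 h)
  refine altAction_mem (A := S) (B := S.toSubmodule.toAddSubgroup) (fun l hl => ?_) (fun k hk => ?_)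
    (by simp)
  · refine eval₂_mem (fun d _ => S.algebraMap_mem _) fun k => ?_
    exact getD_of_forall_mem (P := (· ∈ S)) hl S.zero_mem k
  · exact X_mem_supported.2 (by simpa using hk)

lemma isHomogeneous_altFamily (hn : ∀ m, (g m).IsHomogeneous n) (m : ℕ) :
    (altFamily n g m).IsHomogeneous n := by
  refine altAction_mem (A := {q | q.IsHomogeneous 1})
    (B := (homogeneousSubmodule ℕ ℚ n).toAddSubgroup) (fun l hl => ?_)
    (fun k _ => isHomogeneous_X ℚ k) (by simp)
  exact one_mul n ▸ (hn _).aeval _ fun k => getD_of_forall_mem hl (isHomogeneous_zero _ _ _) k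

lemma IsQSymStable.isStableX_altFamily (hg : IsQSymStable g) (hn : ∀ m, (g m).totalDegree ≤ n) :
    IsStableX (altFamily n g) := by
  refine ⟨vars_altFamily_subset n g, fun m => ?_⟩
  rw [aeval_altFamily, mul_add, mul_one, add_right_comm,
    (hg.isUnipotent_evalList hn).altAction_add_two_of_eq_zero (by simp) (by simp)]
  exact congrFun (altAction_congr fun k hk => if_pos hk) []

lemma IsQSymStable.satisfiesEx_altFamily (hg : IsQSymStable g)
    (hn : ∀ m, (g m).totalDegree ≤ n) : SatisfiesEx (altFamily n g) := by
  intro m i hi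
  rw [aeval_altFamily, aeval_altFamily, mul_add, mul_one, add_right_comm]
  refine congrFun ((hg.isUnipotent_evalList hn).altAction_cancel (i := i) (by omega) (by simp)
    (fun k hk => ?_) fun k hk => ?_) []
  · rw [if_pos hk, if_neg (by omega)]
  · rw [if_neg hk.not_gt, if_neg (by omega)]

lemma IsUnipotent.altAction_oddZero {M : Type*} [AddCommGroup M]
    {G : List (MvPolynomial ℕ ℚ) → M} (hG : IsUnipotent n G) (m : ℕ)
    (l : List (MvPolynomial ℕ ℚ)) :
    altAction n G oddZero (2 * m + 1) l = G ((List.range m).map X ++ l) := by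
  have hstep (k : ℕ) : altAction n G oddZero (2 * k + 1) = altAction n G oddZero (2 * k) := by
    rw [altAction, if_pos (even_two_mul k), oddZero, if_pos (Nat.mul_mod_right 2 k),
      (hG.isUnipotent_altAction _ _).consInv_zero]
  induction m generalizing l with
  | zero => rw [hstep]; rfl
  | succ m ih =>
    rw [hstep, mul_add, mul_one, altAction, if_neg (by simp), consLetter, ih, List.range_succ]
    simp [oddZero, Nat.add_mod, show (2 * m + 1) / 2 = m by omega]

lemma IsQSymStable.aeval_oddZero_altFamily (hg : IsQSymStable g)
    (hn : ∀ m, (g m).totalDegree ≤ n) (m : ℕ) : aeval oddZero (altFamily n g m) = g m := by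
  rw [aeval_altFamily, (hg.isUnipotent_evalList hn).altAction_oddZero, List.append_nil,
    evalList_map_range hg.1, aeval_X_left_apply]

end Extension

/-- Fix `n ≥ 0`.  The map `Φ` sending a stable x-family `f` satisfying
(E_x) whose members are homogeneous of degree `n` to `g`, `g_m = f_{2m+1}(0,y₁,0,…,0,y_m,0)`
(all odd-indexed variables set to `0`), is `ℚ`-linear and a bijection from the space of
such stable x-families onto the space of quasi-symmetric stable families that are
homogeneous of degree `n`. -/
theorem stmt9 (n : ℕ) :
    (∀ (c : ℚ) (f f' : ℕ → MvPolynomial ℕ ℚ),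
      (fun m => aeval oddZero ((c • f + f') m)) =
        c • (fun m => aeval oddZero (f m)) + fun m => aeval oddZero (f' m)) ∧
    Set.BijOn (fun (f : ℕ → MvPolynomial ℕ ℚ) (m : ℕ) => aeval oddZero (f m))
      {f | IsStableX f ∧ SatisfiesEx f ∧ ∀ m, (f m).IsHomogeneous n}
      {g | IsQSymStable g ∧ ∀ m, (g m).IsHomogeneous n} := by
  refine ⟨fun c f f' => by ext1 m; simp, ?_, ?_, ?_⟩
  · rintro f ⟨hf, hE, hn⟩
    exact ⟨hE.isQSymStable_aeval_oddZero hf, fun m => isHomogeneous_aeval_oddZero (hn m)⟩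
  · rintro f ⟨hf, hE, hn⟩ f' ⟨hf', hE', hn'⟩ h
    exact eq_of_aeval_oddZero_eq hf hE (fun m => (hn m).totalDegree_le) hf' hE'
      (fun m => (hn' m).totalDegree_le) h
  · rintro g ⟨hg, hn⟩
    have hdeg (m : ℕ) : (g m).totalDegree ≤ n := (hn m).totalDegree_le
    exact ⟨altFamily n g, ⟨hg.isStableX_altFamily hdeg, hg.satisfiesEx_altFamily hdeg,
      isHomogeneous_altFamily hn⟩, funext (hg.aeval_oddZero_altFamily hdeg)⟩
end
end

section
/- Let P and P′ be finite ranked posets such that F_P^(N) = F_{P′}^(N) in ℚ[x₁,…,x_N] for every N ≥ 1. Then N_P^(m) = N_{P′}^(m) in ℚ[p₁,…,p_{m+1},q₁,…,q_m] for every m ≥ 0. (In other words, the generating series of P-partitions in one alphabet determines the generating series in two alphabets.) -/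
open MvPolynomial
open scoped Classical

noncomputable section

/- Fix the order-ideal matrices `M f`, where `M f I J = ∏ v ∈ J \ I, f v` for `I ≤ J`.  The
`(⊥, ⊤)` entry of `M f₀ ⋯ M fₙ₋₁` enumerates the monotone labellings of the poset, a label `k`
on `v` having weight `fₖ v`.  If `f` is a constant `a` on the elements of even (resp. odd) height
and `0` elsewhere, then `M f = E a` (resp. `O a`) with `E` and `O` additive characters, and
evaluations of `N_P` are entries of `∏ E (pₖ) O (qₖ)`, while evaluations of `F_P` are, up to a
global sign, entries of `∏ T (yₖ)` with `T y = E (-y) O y`.  Since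
`O (-w) E p O (w - p) = T w ⁻¹ T (w - p)`, the product `O (-z) (∏ E (pₖ) O (qₖ))` with
`z = ∑ (pₖ + qₖ)` is a product of factors `T y` and `T y ⁻¹`; as inverses in a finite-dimensional
algebra are polynomials, it is a linear combination of products of the `T y`, with coefficients
that can be chosen uniformly for two posets.  Moreover `O (-z)` does not affect the row of `⊥`,
because the minimal elements have even height.  The two signs agree, as `F_P (1, …, 1) > 0` for
`N` large. -/

section Algebra

theorem mem_subalgebra_of_mul_eq_one {R A : Type*} [CommRing R] [IsArtinianRing R] [Ring A]
    [Algebra R A] [Algebra.IsIntegral R A] (S : Subalgebra R A) {a b : A} (ha : a ∈ S)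
    (hab : a * b = 1) (hba : b * a = 1) : b ∈ S := by
  have : Algebra.IsIntegral R S := Algebra.IsIntegral.of_injective S.val Subtype.val_injective
  have ha_reg : (⟨a, ha⟩ : S) ∈ nonZeroDivisors S :=
    comap_nonZeroDivisors_le_of_injective (f := S.subtype) Subtype.val_injective
      (IsUnit.mem_nonZeroDivisors ⟨⟨a, b, hab, hba⟩, rfl⟩)
  obtain ⟨c, hc⟩ := (IsArtinianRing.isUnit_of_nonZeroDivisor_of_isIntegral' (R := R)
    ha_reg).exists_right_inv
  have hac : a * c = 1 := congrArg Subtype.val hc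
  rw [left_inv_eq_right_inv hba hac]
  exact c.2

theorem prod_map_range_two_mul {M : Type*} [Monoid M] (f : ℕ → M) (n : ℕ) :
    ((List.range (2 * n)).map f).prod =
      ((List.range n).map fun k => f (2 * k) * f (2 * k + 1)).prod := by
  induction n with
  | zero => rfl
  | succ n ih => rw [mul_add_one, List.prod_range_succ, List.prod_range_succ, List.prod_range_succ,
      ih, mul_assoc]

/-- The pair of two additive characters, as a character with values in the product monoid. -/
def prodChar {G M N : Type*} [AddMonoid G] [Monoid M] [Monoid N] (φ : AddChar G M)
    (ψ : AddChar G N) : AddChar G (M × N) where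
  toFun a := (φ a, ψ a)
  map_zero_eq_one' := by simp
  map_add_eq_mul' a b := by simp [AddChar.map_add_eq_mul]

theorem prod_map_prodChar {G M N : Type*} [AddMonoid G] [Monoid M] [Monoid N] (φ φ' : AddChar G M)
    (ψ ψ' : AddChar G N) (p q : ℕ → G) (n : ℕ) :
    ((List.range n).map fun k => prodChar φ ψ (p k) * prodChar φ' ψ' (q k)).prod =
      (((List.range n).map fun k => φ (p k) * φ' (q k)).prod,
        ((List.range n).map fun k => ψ (p k) * ψ' (q k)).prod) := by
  induction n with
  | zero => rfl
  | succ n ih =>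
    rw [List.prod_range_succ, List.prod_range_succ, List.prod_range_succ, ih]
    rfl

variable {R A : Type*} [CommRing R] [Ring A] [Algebra R A] (E O : AddChar R A)

/-- The subalgebra generated by the elements `E (-y) * O y`.  A linear functional is determined on
it by its values on products of these elements. -/
def negPairSubalgebra : Subalgebra R A :=
  Algebra.adjoin R (Set.range fun y => E (-y) * O y)

theorem conj_mul_mem_negPairSubalgebra [IsArtinianRing R] [Algebra.IsIntegral R A] (w p : R) :
    O (-w) * E p * O (w - p) ∈ negPairSubalgebra E O := by
  have hT (y : R) : E (-y) * O y ∈ negPairSubalgebra E O := Algebra.subset_adjoin ⟨y, rfl⟩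
  have hTinv : O (-w) * E w ∈ negPairSubalgebra E O := by
    refine mem_subalgebra_of_mul_eq_one _ (hT w) ?_ ?_
    · rw [mul_assoc, ← mul_assoc (O w), ← O.map_add_eq_mul]
      simp [← E.map_add_eq_mul]
    · rw [mul_assoc, ← mul_assoc (E w), ← E.map_add_eq_mul]
      simp [← O.map_add_eq_mul]
  convert mul_mem hTinv (hT (w - p)) using 1
  rw [mul_assoc, mul_assoc, ← mul_assoc (E w), ← E.map_add_eq_mul, neg_sub, add_sub_cancel]

theorem conj_prod_mem_negPairSubalgebra [IsArtinianRing R] [Algebra.IsIntegral R A] (p q : ℕ → R)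
    (n : ℕ) (z : R) :
    O (-(z + ∑ k ∈ Finset.range n, (p k + q k))) *
      ((List.range n).map fun k => E (p k) * O (q k)).prod * O z ∈ negPairSubalgebra E O := by
  induction n generalizing z with
  | zero => simp [← O.map_add_eq_mul]
  | succ n ih =>
    set w := z + (p n + q n) with hw
    convert mul_mem (ih w) (conj_mul_mem_negPairSubalgebra E O w (p n)) using 1
    have hOw : O w * O (-w) = 1 := by rw [← O.map_add_eq_mul, add_neg_cancel, O.map_zero_eq_one]
    have hOq : O (q n) * O z = O (w - p n) := by
      rw [← O.map_add_eq_mul, hw]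
      congr 1
      ring
    have hsum : z + ∑ k ∈ Finset.range (n + 1), (p k + q k) =
        w + ∑ k ∈ Finset.range n, (p k + q k) := by
      rw [Finset.sum_range_succ, hw]
      ring
    rw [List.prod_range_succ, hsum, ← hOq]
    simp only [mul_assoc]
    rw [← mul_assoc (O w), hOw, one_mul]

theorem exists_eq_prod_of_mem_closure_range {G M : Type*} [Zero G] [Monoid M] {f : G → M}
    (hf : f 0 = 1) {x : M} (hx : x ∈ Submonoid.closure (Set.range f)) :
    ∃ n, 1 ≤ n ∧ ∃ y : ℕ → G, x = ((List.range n).map fun k => f (y k)).prod := by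
  obtain ⟨l, hl, rfl⟩ := Submonoid.exists_list_of_mem_closure hx
  obtain ⟨ys, rfl⟩ : l ∈ Set.range (List.map f) := by rwa [Set.range_list_map]
  refine ⟨ys.length + 1, by lia, fun k => ys.getD k 0, ?_⟩
  have hys : (List.range ys.length).map (fun k => f (ys.getD k 0)) = ys.map f :=
    List.ext_getElem (by simp) (by simp +contextual)
  rw [List.prod_range_succ, hys]
  simp [hf]

theorem apply_conj_prod_eq_zero [IsArtinianRing R] [Algebra.IsIntegral R A] {M : Type*}
    [AddCommGroup M] [Module R M] (L : A →ₗ[R] M)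
    (hL : ∀ n, 1 ≤ n → ∀ y : ℕ → R,
      L ((List.range n).map fun k => E (-y k) * O (y k)).prod = 0) (p q : ℕ → R) (n : ℕ) :
    L (O (-∑ k ∈ Finset.range n, (p k + q k)) *
      ((List.range n).map fun k => E (p k) * O (q k)).prod) = 0 := by
  have hker : (negPairSubalgebra E O).toSubmodule ≤ LinearMap.ker L := by
    rw [negPairSubalgebra, Algebra.adjoin_eq_span, Submodule.span_le]
    intro x hx
    obtain ⟨n, hn, y, rfl⟩ := exists_eq_prod_of_mem_closure_range (by simp) hx
    exact hL n hn y
  exact hker (by simpa using conj_prod_mem_negPairSubalgebra E O p q n 0)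

end Algebra

section Labelling

variable {α : Type*} [Preorder α] {n : ℕ}

/-- The order ideal of the elements whose label is not the last one. -/
def belowLast (r : α →o Fin (n + 1)) : LowerSet α :=
  ⟨r ⁻¹' Set.Iio (Fin.last n), (isLowerSet_Iio _).preimage r.monotone⟩

theorem mem_belowLast {r : α →o Fin (n + 1)} {v : α} : v ∈ belowLast r ↔ r v < Fin.last n :=
  Iff.rfl

theorem apply_eq_last_of_notMem_belowLast {r : α →o Fin (n + 1)} {v : α}
    (hv : v ∉ belowLast r) : r v = Fin.last n :=
  Fin.last_le_iff.1 (not_lt.1 hv)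

/-- The labelling obtained from `r` by giving a new last label to the complement of `J`. -/
def extendLast (J : LowerSet α) (r : α →o Fin (n + 1)) : α →o Fin (n + 2) where
  toFun v := if v ∈ J then (r v).castSucc else Fin.last (n + 1)
  monotone' u v huv := by
    by_cases hv : v ∈ J
    · have hu : u ∈ J := J.lower huv hv
      simpa [hu, hv] using r.monotone huv
    · simp [hv, Fin.le_last]

theorem extendLast_apply (J : LowerSet α) (r : α →o Fin (n + 1)) (v : α) :
    extendLast J r v = if v ∈ J then (r v).castSucc else Fin.last (n + 1) :=
  rfl

theorem belowLast_extendLast (J : LowerSet α) (r : α →o Fin (n + 1)) :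
    belowLast (extendLast J r) = J := by
  ext v
  by_cases hv : v ∈ J <;> simp [mem_belowLast, extendLast_apply, hv, Fin.castSucc_lt_last]

/-- The labelling obtained from `s` by merging the last two labels. -/
def mergeLast (s : α →o Fin (n + 2)) : α →o Fin (n + 1) :=
  (Fin.predAboveOrderHom (Fin.last n)).comp s

theorem mergeLast_apply (s : α →o Fin (n + 2)) (v : α) :
    mergeLast s v = (Fin.last n).predAbove (s v) :=
  rfl

theorem belowLast_mergeLast_le (s : α →o Fin (n + 2)) :
    belowLast (mergeLast s) ≤ belowLast s := by
  intro v hv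
  by_contra hs
  simp [mem_belowLast, mergeLast_apply, apply_eq_last_of_notMem_belowLast hs] at hv

theorem mergeLast_extendLast {J : LowerSet α} {r : α →o Fin (n + 1)} (h : belowLast r ≤ J) :
    mergeLast (extendLast J r) = r := by
  ext v
  by_cases hv : v ∈ J
  · simp [mergeLast_apply, extendLast_apply, hv]
  · have hlast : r v = Fin.last n := apply_eq_last_of_notMem_belowLast fun hr => hv (h hr)
    simp [mergeLast_apply, extendLast_apply, hv, hlast]

theorem castSucc_mergeLast {s : α →o Fin (n + 2)} {v : α} (hv : v ∈ belowLast s) :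
    (mergeLast s v).castSucc = s v := by
  obtain ⟨i, hi⟩ := Fin.exists_castSucc_eq.2 (mem_belowLast.1 hv).ne
  rw [mergeLast_apply, ← hi, Fin.predAbove_last_castSucc]

theorem extendLast_mergeLast (s : α →o Fin (n + 2)) :
    extendLast (belowLast s) (mergeLast s) = s := by
  ext v
  by_cases hv : v ∈ belowLast s
  · simp [extendLast_apply, hv, castSucc_mergeLast]
  · simp [extendLast_apply, hv, apply_eq_last_of_notMem_belowLast hv]

variable [Fintype α]

instance orderHomFintype {β : Type*} [Fintype β] [Preorder β] : Fintype (α →o β) :=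
  DFunLike.fintype _

theorem sum_belowLast_le {R : Type*} [CommSemiring R] (J : LowerSet α) (f : ℕ → α → R) :
    ∑ r : α →o Fin (n + 1) with belowLast r ≤ J, ∏ v with v ∈ J, f (r v) v =
      ∑ s : α →o Fin (n + 2) with belowLast s = J, ∏ v with v ∈ J, f (s v) v := by
  refine Finset.sum_nbij' (extendLast J) mergeLast ?_ ?_ ?_ ?_ ?_
  · simp [belowLast_extendLast]
  · intro s hs
    obtain rfl := (Finset.mem_filter.1 hs).2
    simpa using belowLast_mergeLast_le s
  · simpa using fun r hr => mergeLast_extendLast hr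
  · intro s hs
    obtain rfl := (Finset.mem_filter.1 hs).2
    exact extendLast_mergeLast s
  · intro r _
    refine Finset.prod_congr rfl fun v hv => ?_
    simp [extendLast_apply, (Finset.mem_filter.1 hv).2]

end Labelling

section Transfer

variable {α R : Type*} [Fintype α] [CommSemiring R] [Preorder α]

/-- The matrix indexed by order ideals whose `(I, J)` entry is, for `I ≤ J`, the weight of
`J \ I` when `v` has weight `f v`.  It describes adding one more label to a labelling. -/
def transferMatrix (f : α → R) : Matrix (LowerSet α) (LowerSet α) R :=
  .of fun I J => if I ≤ J then ∏ v with v ∈ J ∧ v ∉ I, f v else 0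

theorem transferMatrix_apply_of_le (f : α → R) {I J : LowerSet α} (h : I ≤ J) :
    transferMatrix f I J = ∏ v with v ∈ J ∧ v ∉ I, f v :=
  if_pos h

theorem transferMatrix_apply_of_not_le (f : α → R) {I J : LowerSet α} (h : ¬ I ≤ J) :
    transferMatrix f I J = 0 :=
  if_neg h

theorem transferMatrix_zero : transferMatrix (0 : α → R) = 1 := by
  ext I J
  rcases eq_or_ne I J with rfl | hne
  · simp [transferMatrix_apply_of_le]
  · rw [Matrix.one_apply_ne hne]
    by_cases h : I ≤ J
    · obtain ⟨v, hvJ, hvI⟩ :=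
        Set.exists_of_ssubset (LowerSet.coe_ssubset_coe.2 (h.lt_of_ne hne))
      rw [transferMatrix_apply_of_le _ h]
      exact Finset.prod_eq_zero (i := v) (by simpa using ⟨hvJ, hvI⟩) rfl
    · exact transferMatrix_apply_of_not_le _ h

theorem transferMatrix_mul_bot_apply {f : α → R} (hf : ∀ v, IsMin v → f v = 0)
    (X : Matrix (LowerSet α) (LowerSet α) R) (J : LowerSet α) :
    (transferMatrix f * X) ⊥ J = X ⊥ J := by
  have hrow (K : LowerSet α) (hK : K ≠ ⊥) : transferMatrix f ⊥ K = 0 := by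
    obtain ⟨v, hv⟩ := (K : Set α).toFinite.exists_minimal (by simpa using hK)
    have hmin : IsMin v := fun u huv => hv.2 (K.lower huv hv.1) huv
    rw [transferMatrix_apply_of_le _ bot_le]
    exact Finset.prod_eq_zero (i := v) (by simpa using hv.1) (hf v hmin)
  rw [Matrix.mul_apply, Finset.sum_eq_single ⊥ (fun K _ hK => by rw [hrow K hK, zero_mul])
    (by simp), transferMatrix_apply_of_le f le_rfl]
  simp

theorem prod_belowLast_mul_transferMatrix (W : ℕ → α → R) {n : ℕ} (r : α →o Fin (n + 1))
    (J : LowerSet α) :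
    (∏ v with v ∈ belowLast r, W (r v) v) * transferMatrix (W n) (belowLast r) J =
      if belowLast r ≤ J then ∏ v with v ∈ J, W (r v) v else 0 := by
  split_ifs with h
  · rw [transferMatrix_apply_of_le _ h,
      ← Finset.prod_filter_mul_prod_filter_not {v | v ∈ J} (· ∈ belowLast r),
      Finset.filter_filter, Finset.filter_filter]
    congr 1
    · refine Finset.prod_congr (Finset.filter_congr fun v _ => ?_) fun _ _ => rfl
      exact ⟨fun hv => ⟨h hv, hv⟩, And.right⟩
    · refine Finset.prod_congr rfl fun v hv => ?_
      rw [apply_eq_last_of_notMem_belowLast (Finset.mem_filter.1 hv).2.2, Fin.val_last]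
  · rw [transferMatrix_apply_of_not_le _ h, mul_zero]

theorem prod_transferMatrix_bot_apply (W : ℕ → α → R) (n : ℕ) (J : LowerSet α) :
    ((List.range n).map fun k => transferMatrix (W k)).prod ⊥ J =
      ∑ r : α →o Fin (n + 1) with belowLast r = J, ∏ v with v ∈ J, W (r v) v := by
  induction n generalizing J with
  | zero =>
    have hbot (r : α →o Fin 1) : belowLast r = ⊥ := by
      ext v
      simp [mem_belowLast, Subsingleton.elim (r v) 0]
    have : Unique (α →o Fin 1) :=
      { default := OrderHom.const α 0, uniq := fun r => by ext v; simp }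
    rcases eq_or_ne J ⊥ with rfl | hJ
    · simp [hbot]
    · simp [hbot, hJ.symm]
  | succ n ih =>
    calc ((List.range (n + 1)).map fun k => transferMatrix (W k)).prod ⊥ J
      _ = ∑ I, ∑ r : α →o Fin (n + 1) with belowLast r = I,
            (∏ v with v ∈ belowLast r, W (r v) v) * transferMatrix (W n) (belowLast r) J := by
        rw [List.prod_range_succ, Matrix.mul_apply]
        refine Finset.sum_congr rfl fun I _ => ?_
        rw [ih, Finset.sum_mul]
        refine Finset.sum_congr rfl fun r hr => ?_
        rw [(Finset.mem_filter.1 hr).2]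
      _ = ∑ r : α →o Fin (n + 1),
            (∏ v with v ∈ belowLast r, W (r v) v) * transferMatrix (W n) (belowLast r) J :=
        Finset.sum_fiberwise _ _ _
      _ = ∑ r : α →o Fin (n + 1) with belowLast r ≤ J, ∏ v with v ∈ J, W (r v) v := by
        rw [Finset.sum_filter]
        exact Finset.sum_congr rfl fun r _ => prod_belowLast_mul_transferMatrix W r J
      _ = _ := sum_belowLast_le J fun x v => W x v

theorem prod_transferMatrix_bot_top (W : ℕ → α → R) (n : ℕ) :
    ((List.range n).map fun k => transferMatrix (W k)).prod ⊥ ⊤ =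
      ∑ r : α →o Fin n, ∏ v, W (r v) v := by
  rw [prod_transferMatrix_bot_apply]
  symm
  refine Finset.sum_nbij (fun r => Fin.castSuccOrderEmb.toOrderHom.comp r) ?_ ?_ ?_ ?_
  · intro r _
    simp [LowerSet.ext_iff, Set.ext_iff, mem_belowLast]
  · intro r _ s _ hrs
    ext v
    simpa using congrArg Fin.val (DFunLike.congr_fun hrs v)
  · intro s hs
    have hlt (v : α) : (s v : ℕ) < n := by
      have hv : v ∈ belowLast s := by simp_all
      exact hv
    exact ⟨⟨fun v => ⟨s v, hlt v⟩, fun u v h => s.monotone h⟩, by simp, by ext v; rfl⟩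
  · simp

end Transfer

section Alternating

variable {α : Type*} [PartialOrder α]

/-- Between two comparable elements of `s` there is an element outside `s`, so that an interval
of order ideals contained in `s` is an antichain. -/
def IsAlternating (s : Set α) : Prop :=
  ∀ ⦃x⦄, x ∈ s → ∀ ⦃y⦄, y ∈ s → x < y → ∃ z ∉ s, x < z ∧ z < y

theorem IsAlternating.isLowerSet_of_subset_of_subset {s : Set α} (hs : IsAlternating s)
    {I J : LowerSet α} (hIJ : (J \ I : Set α) ⊆ s) {t : Set α} (ht : (I : Set α) ⊆ t)
    (ht' : t ⊆ J) : IsLowerSet t := by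
  intro y x hxy hy
  by_contra hx
  have hyI : y ∉ I := fun h => hx (ht (I.lower hxy h))
  have hxI : x ∉ I := fun h => hx (ht h)
  have hlt : x < y := lt_of_le_of_ne hxy fun h => hx (h ▸ hy)
  obtain ⟨z, hz, hxz, hzy⟩ := hs (hIJ ⟨J.lower hxy (ht' hy), hxI⟩) (hIJ ⟨ht' hy, hyI⟩) hlt
  exact hz (hIJ ⟨J.lower hzy.le (ht' hy), fun h => hxI (I.lower hxz.le h)⟩)

variable {R : Type*} [Fintype α] [CommSemiring R]

theorem transferMatrix_apply_eq_zero {f : α → R} {s : Set α} (hf : ∀ v ∉ s, f v = 0)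
    {I J : LowerSet α} (h : ¬ (J \ I : Set α) ⊆ s) : transferMatrix f I J = 0 := by
  obtain ⟨v, hv, hvs⟩ := Set.not_subset.1 h
  by_cases hIJ : I ≤ J
  · rw [transferMatrix_apply_of_le _ hIJ]
    exact Finset.prod_eq_zero (i := v) (by simpa using hv) (hf v hvs)
  · exact transferMatrix_apply_of_not_le _ hIJ

theorem transferMatrix_mul_apply_eq_zero {f g : α → R} {s : Set α} (hf : ∀ v ∉ s, f v = 0)
    (hg : ∀ v ∉ s, g v = 0) {I J : LowerSet α} (h : ¬ (J \ I : Set α) ⊆ s) :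
    (transferMatrix f * transferMatrix g) I J = 0 := by
  obtain ⟨v, ⟨hvJ, hvI⟩, hvs⟩ := Set.not_subset.1 h
  rw [Matrix.mul_apply]
  refine Finset.sum_eq_zero fun K _ => ?_
  by_cases hvK : v ∈ K
  · rw [transferMatrix_apply_eq_zero hf fun hIK => hvs (hIK ⟨hvK, hvI⟩), zero_mul]
  · rw [transferMatrix_apply_eq_zero hg fun hKJ => hvs (hKJ ⟨hvJ, hvK⟩), mul_zero]

theorem transferMatrix_mul_apply (f g : α → R) (I J : LowerSet α) :
    (transferMatrix f * transferMatrix g) I J =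
      ∑ K with I ≤ K ∧ K ≤ J, (∏ v with v ∈ K ∧ v ∉ I, f v) * ∏ v with v ∈ J ∧ v ∉ K, g v := by
  rw [Matrix.mul_apply, Finset.sum_filter]
  refine Finset.sum_congr rfl fun K _ => ?_
  by_cases hIK : I ≤ K <;> by_cases hKJ : K ≤ J <;>
    simp [transferMatrix_apply_of_le, transferMatrix_apply_of_not_le, hIK, hKJ]

theorem IsAlternating.transferMatrix_mul_apply_of_le {s : Set α} (hs : IsAlternating s)
    (f g : α → R) {I J : LowerSet α} (hIJ : I ≤ J) (hsub : (J \ I : Set α) ⊆ s) :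
    (transferMatrix f * transferMatrix g) I J = transferMatrix (f + g) I J := by
  rw [transferMatrix_mul_apply, transferMatrix_apply_of_le _ hIJ]
  simp only [Pi.add_apply]
  rw [Finset.prod_add]
  refine Finset.sum_nbij (fun K => ({v | v ∈ K ∧ v ∉ I} : Finset α)) ?_ ?_ ?_ ?_
  · intro K hK
    obtain ⟨-, hKJ⟩ := (Finset.mem_filter.1 hK).2
    exact Finset.mem_powerset.2 (Finset.monotone_filter_right _ fun v _ hv => ⟨hKJ hv.1, hv.2⟩)
  · intro K hK L hL hKL
    obtain ⟨hIK, -⟩ := (Finset.mem_filter.1 hK).2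
    obtain ⟨hIL, -⟩ := (Finset.mem_filter.1 hL).2
    ext v
    by_cases hv : v ∈ I
    · exact iff_of_true (hIK hv) (hIL hv)
    · simpa [hv] using Finset.ext_iff.1 hKL v
  · intro t ht
    have ht' (v) (hv : v ∈ t) : v ∈ J ∧ v ∉ I := by
      simpa using Finset.mem_powerset.1 ht hv
    have hIt : (I ∪ t : Set α) ⊆ J := Set.union_subset hIJ fun v hv => (ht' v hv).1
    let K : LowerSet α := ⟨I ∪ t, hs.isLowerSet_of_subset_of_subset hsub Set.subset_union_left hIt⟩
    have hK (v : α) : v ∈ K ↔ v ∈ I ∨ v ∈ t := Iff.rfl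
    refine ⟨K, Finset.mem_filter.2 ⟨Finset.mem_univ _, Set.subset_union_left, hIt⟩, ?_⟩
    ext v
    have hv := ht' v
    simp only [Finset.mem_filter, Finset.mem_univ, true_and, hK]
    tauto
  · intro K hK
    obtain ⟨hIK, -⟩ := (Finset.mem_filter.1 hK).2
    congr 1
    refine Finset.prod_congr (Finset.ext fun v => ?_) fun _ _ => rfl
    have hv : v ∈ I → v ∈ K := fun h => hIK h
    simp only [Finset.mem_filter, Finset.mem_univ, true_and, Finset.mem_sdiff]
    tauto

theorem IsAlternating.transferMatrix_mul {s : Set α} (hs : IsAlternating s) {f g : α → R}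
    (hf : ∀ v ∉ s, f v = 0) (hg : ∀ v ∉ s, g v = 0) :
    transferMatrix f * transferMatrix g = transferMatrix (f + g) := by
  ext I J
  by_cases hsub : (J \ I : Set α) ⊆ s
  · by_cases hIJ : I ≤ J
    · exact hs.transferMatrix_mul_apply_of_le f g hIJ hsub
    · have hempty (K : LowerSet α) : ¬ (I ≤ K ∧ K ≤ J) := fun h => hIJ (h.1.trans h.2)
      simp [transferMatrix_mul_apply, transferMatrix_apply_of_not_le _ hIJ, hempty]
  · rw [transferMatrix_mul_apply_eq_zero hf hg hsub, transferMatrix_apply_eq_zero _ hsub]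
    exact fun v hv => by simp [hf v hv, hg v hv]

end Alternating

section Character

variable {α R : Type*} [PartialOrder α] [Fintype α] [CommSemiring R] {s : Set α}

variable (R) in
/-- The additive character sending `a` to the transfer matrix in which the elements of `s` have
weight `a` and all other elements have weight `0`. -/
def indicatorChar (hs : IsAlternating s) : AddChar R (Matrix (LowerSet α) (LowerSet α) R) where
  toFun a := transferMatrix (s.indicator fun _ => a)
  map_zero_eq_one' := by rw [Set.indicator_zero, ← transferMatrix_zero]; rfl
  map_add_eq_mul' a b := by
    rw [hs.transferMatrix_mul (fun v hv => Set.indicator_of_notMem hv _)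
      fun v hv => Set.indicator_of_notMem hv _, ← Set.indicator_add']
    rfl

theorem indicatorChar_apply (hs : IsAlternating s) (a : R) :
    indicatorChar R hs a = transferMatrix (s.indicator fun _ => a) :=
  rfl

end Character

section Ranked

variable {α : Type} [PartialOrder α] [Finite α] {ht : α → ℕ}

theorem IsRanked.strictMono (h : IsRanked ht) : StrictMono ht := by
  let := Fintype.ofFinite α
  let := Fintype.toLocallyFiniteOrder (α := α)
  exact (strictMono_iff_forall_covBy ht).2 fun x y hxy => by simp [h.2 x y hxy]

theorem IsRanked.isAlternating (h : IsRanked ht) {p : ℕ → Prop} (hp : ∀ n, p n → ¬ p (n + 1)) :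
    IsAlternating {v | p (ht v)} := by
  intro x hx y hy hxy
  obtain ⟨z, hxz, hzy⟩ := exists_covBy_le_of_lt hxy
  have hz : ¬ p (ht z) := h.2 x z hxz ▸ hp _ hx
  exact ⟨z, hz, hxz.lt, lt_of_le_of_ne hzy fun hzy => hz (hzy ▸ hy)⟩

theorem IsRanked.isAlternating_even (h : IsRanked ht) : IsAlternating {v | Even (ht v)} :=
  h.isAlternating fun n hn => by simpa [Nat.even_add_one] using hn

theorem IsRanked.isAlternating_odd (h : IsRanked ht) : IsAlternating {v | Odd (ht v)} :=
  h.isAlternating fun n hn => by simpa [Nat.odd_add_one] using hn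

theorem IsRanked.orderCond_ht (h : IsRanked ht) {N : ℕ} (hN : ∀ v, ht v < N) :
    OrderCond ht fun v => (⟨ht v, hN v⟩ : Fin N) :=
  ⟨fun _ _ hxy => h.strictMono.monotone hxy, fun _ _ hxy _ => h.strictMono hxy⟩

theorem IsRanked.orderCond_iff_monotone (h : IsRanked ht) {N : ℕ} (s : α → Fin N) :
    OrderCond ht s ↔ Monotone fun v => 2 * (s v : ℕ) + ht v % 2 := by
  constructor
  · intro hs x y hxy
    rcases hxy.eq_or_lt with rfl | hlt
    · exact le_rfl
    · have hle : (s x : ℕ) ≤ s y := hs.1 x y hxy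
      have hsucc (hx : ht x % 2 = 1) : (s x : ℕ) < s y := hs.2 x y hlt (Nat.odd_iff.2 hx)
      dsimp only
      lia
  · intro hs
    have hle (x y : α) (hxy : x ≤ y) : (s x : ℕ) ≤ s y := by
      have := hs hxy
      dsimp only at this
      lia
    have hlt (x y : α) (hxy : x < y) (hx : Odd (ht x)) (hy : ¬ Odd (ht y)) : (s x : ℕ) < s y := by
      have := hs hxy.le
      dsimp only at this
      rw [Nat.odd_iff] at hx hy
      lia
    refine ⟨hle, fun x y hxy hx => ?_⟩
    by_cases hy : Odd (ht y)
    · obtain ⟨z, hz, hxz, hzy⟩ := h.isAlternating_odd hx hy hxy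
      exact (hlt x z hxz hx hz).trans_le (hle z y hzy.le)
    · exact hlt x y hxy hx hy

end Ranked

/-- The sign by which `twoAlphabetSum` changes when its first alphabet is negated. -/
def evenSign {α : Type*} [Fintype α] (ht : α → ℕ) : ℤ :=
  (-1) ^ Finset.card {v | Even (ht v)}

theorem evenSign_mul_self {α : Type*} [Fintype α] (ht : α → ℕ) :
    evenSign ht * evenSign ht = 1 := by
  rw [evenSign, ← mul_pow, neg_one_mul, neg_neg, one_pow]

section TwoAlphabetSum

variable {α : Type} [PartialOrder α] [Fintype α] {ht : α → ℕ}

variable {R : Type*} [CommSemiring R]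

/-- The sum over all `r` satisfying the order condition of the monomial in which an element of
even (resp. odd) height with label `k` contributes `p k` (resp. `q k`).  It specializes to the
evaluations of both `N_P` and `F_P`. -/
def twoAlphabetSum (ht : α → ℕ) (p q : ℕ → R) (N : ℕ) : R :=
  ∑ r : α → Fin N with OrderCond ht r, ∏ v, if Even (ht v) then p (r v) else q (r v)

theorem IsRanked.sum_orderHom_eq_twoAlphabetSum (h : IsRanked ht) (p q : ℕ → R) (N : ℕ) :
    ∑ r : α →o Fin (2 * N) with ∀ v, (r v : ℕ) % 2 = ht v % 2,
      ∏ v, (if Even (ht v) then p (r v / 2) else q (r v / 2)) = twoAlphabetSum ht p q N := by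
  refine Finset.sum_nbij (fun r v => ⟨r v / 2, by lia⟩) ?_ ?_ ?_ fun _ _ => rfl
  · intro r hr
    have hpar := (Finset.mem_filter.1 hr).2
    have hr' (v : α) : 2 * ((r v : ℕ) / 2) + ht v % 2 = r v := by
      rw [← hpar v, Nat.div_add_mod]
    refine Finset.mem_filter.2 ⟨Finset.mem_univ _, (h.orderCond_iff_monotone _).2 ?_⟩
    intro x y hxy
    simpa only [hr'] using Fin.val_le_of_le (r.monotone hxy)
  · intro r hr r' hr' heq
    have hpar := (Finset.mem_filter.1 hr).2
    have hpar' := (Finset.mem_filter.1 hr').2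
    ext v
    have hdiv : (r v : ℕ) / 2 = r' v / 2 := congrArg Fin.val (congrFun heq v)
    rw [← Nat.div_add_mod (r v : ℕ) 2, ← Nat.div_add_mod (r' v : ℕ) 2, hdiv, hpar, hpar']
  · intro s hs
    have hmono := (h.orderCond_iff_monotone s).1 (Finset.mem_filter.1 hs).2
    obtain ⟨r, hr⟩ : ∃ r : α →o Fin (2 * N), ∀ v, (r v : ℕ) = 2 * s v + ht v % 2 :=
      ⟨⟨fun v => ⟨2 * s v + ht v % 2, by lia⟩, hmono⟩, fun _ => rfl⟩
    refine ⟨r, Finset.mem_filter.2 ⟨Finset.mem_univ _, fun v => by rw [hr]; lia⟩, ?_⟩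
    ext v
    dsimp only
    rw [hr]
    lia

theorem IsRanked.prod_indicatorChar_bot_top (h : IsRanked ht) (p q : ℕ → R) (N : ℕ) :
    ((List.range N).map fun k => indicatorChar R h.isAlternating_even (p k) *
      indicatorChar R h.isAlternating_odd (q k)).prod ⊥ ⊤ = twoAlphabetSum ht p q N := by
  let W (j : ℕ) (v : α) : R :=
    if j % 2 = ht v % 2 then if Even (ht v) then p (j / 2) else q (j / 2) else 0
  have heven (k : ℕ) : transferMatrix (W (2 * k)) = indicatorChar R h.isAlternating_even (p k) := by
    rw [indicatorChar_apply]
    congr 1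
    ext v
    rcases Nat.mod_two_eq_zero_or_one (ht v) with hv | hv <;>
      simp [W, Set.indicator, Nat.even_iff, hv]
  have hodd (k : ℕ) :
      transferMatrix (W (2 * k + 1)) = indicatorChar R h.isAlternating_odd (q k) := by
    rw [indicatorChar_apply]
    congr 1
    ext v
    rcases Nat.mod_two_eq_zero_or_one (ht v) with hv | hv <;>
      simp [W, Set.indicator, Nat.even_iff, Nat.odd_iff, Nat.mul_add_div, hv]
  rw [← h.sum_orderHom_eq_twoAlphabetSum, Finset.sum_filter]
  simp only [← heven, ← hodd]
  rw [← prod_map_range_two_mul fun j => transferMatrix (W j), prod_transferMatrix_bot_top]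
  refine Finset.sum_congr rfl fun r _ => ?_
  split_ifs with hr
  · simp [W, hr]
  · push Not at hr
    obtain ⟨v, hv⟩ := hr
    exact Finset.prod_eq_zero (Finset.mem_univ v) (if_neg hv)

theorem eval_FP (ht : α → ℕ) (y : ℕ → ℚ) (N : ℕ) :
    eval y (FP α ht N) = twoAlphabetSum ht y y N := by
  simp only [FP, twoAlphabetSum, map_sum, Finset.sum_filter, ite_self]
  refine Finset.sum_congr rfl fun r _ => ?_
  split_ifs <;> simp

theorem eval_NP (ht : α → ℕ) (g : ℕ ⊕ ℕ → ℚ) (m : ℕ) :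
    eval g (NP α ht m) = twoAlphabetSum ht (fun k => g (.inl k))
      (fun k => if k < m then g (.inr k) else 0) (m + 1) := by
  simp only [NP, twoAlphabetSum, map_sum, Finset.sum_filter]
  refine Finset.sum_congr rfl fun r _ => ?_
  by_cases hr : OrderCond ht r
  swap
  · simp [hr]
  by_cases hm : ∀ v, Odd (ht v) → (r v : ℕ) < m
  · rw [if_pos ⟨hr, hm⟩, if_pos hr, map_prod]
    refine Finset.prod_congr rfl fun v _ => ?_
    split_ifs with hv hvm
    · simp
    · simp
    · exact absurd (hm v (Nat.not_even_iff_odd.1 hv)) hvm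
  · rw [if_neg fun h => hm h.2, if_pos hr, map_zero]
    push Not at hm
    obtain ⟨v, hv, hvm⟩ := hm
    refine (Finset.prod_eq_zero (Finset.mem_univ v) ?_).symm
    rw [if_neg (Nat.not_even_iff_odd.2 hv), if_neg hvm.not_gt]

theorem twoAlphabetSum_neg_left {S : Type*} [CommRing S] (ht : α → ℕ) (p q : ℕ → S) (N : ℕ) :
    twoAlphabetSum ht (fun k => -p k) q N = evenSign ht * twoAlphabetSum ht p q N := by
  rw [twoAlphabetSum, twoAlphabetSum, Finset.mul_sum]
  refine Finset.sum_congr rfl fun r _ => ?_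
  rw [evenSign, Int.cast_pow, ← Finset.prod_const, Finset.prod_filter, ← Finset.prod_mul_distrib]
  refine Finset.prod_congr rfl fun v _ => ?_
  split_ifs <;> simp

end TwoAlphabetSum

section Comparison

variable {α β : Type} [PartialOrder α] [Fintype α] [PartialOrder β] [Fintype β] {ht : α → ℕ}
  {ht' : β → ℕ}

theorem IsRanked.indicatorChar_odd_mul_bot_apply {R : Type*} [CommSemiring R] (h : IsRanked ht)
    (a : R) (X : Matrix (LowerSet α) (LowerSet α) R) (J : LowerSet α) :
    (indicatorChar R h.isAlternating_odd a * X) ⊥ J = X ⊥ J :=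
  transferMatrix_mul_bot_apply (fun v hv => by simp [h.1 v hv]) X J

theorem IsRanked.twoAlphabetSum_one_pos (h : IsRanked ht) {N : ℕ} (hN : ∀ v, ht v < N) :
    0 < twoAlphabetSum ht (1 : ℕ → ℚ) 1 N := by
  simpa [twoAlphabetSum, Finset.card_pos] using
    ⟨_, Finset.mem_filter.2 ⟨Finset.mem_univ _, h.orderCond_ht hN⟩⟩

theorem IsRanked.evenSign_mul_twoAlphabetSum_eq {R : Type*} [CommRing R] [IsArtinianRing R]
    (hα : IsRanked ht) (hβ : IsRanked ht')
    (heq : ∀ N, 1 ≤ N → ∀ y : ℕ → R, twoAlphabetSum ht y y N = twoAlphabetSum ht' y y N)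
    (p q : ℕ → R) (N : ℕ) :
    evenSign ht * twoAlphabetSum ht p q N = evenSign ht' * twoAlphabetSum ht' p q N := by
  let E := prodChar (indicatorChar R hα.isAlternating_even) (indicatorChar R hβ.isAlternating_even)
  let O := prodChar (indicatorChar R hα.isAlternating_odd) (indicatorChar R hβ.isAlternating_odd)
  let L := (evenSign ht : R) • (Matrix.entryLinearMap R R (⊥ : LowerSet α) (⊤ : LowerSet α) ∘ₗ
      LinearMap.fst R _ (Matrix (LowerSet β) (LowerSet β) R)) -
    (evenSign ht' : R) • (Matrix.entryLinearMap R R (⊥ : LowerSet β) (⊤ : LowerSet β) ∘ₗ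
      LinearMap.snd R (Matrix (LowerSet α) (LowerSet α) R) _)
  have hL (z : R) (p q : ℕ → R) (N : ℕ) :
      L (O z * ((List.range N).map fun k => E (p k) * O (q k)).prod) =
        evenSign ht * twoAlphabetSum ht p q N - evenSign ht' * twoAlphabetSum ht' p q N := by
    rw [prod_map_prodChar, ← hα.prod_indicatorChar_bot_top, ← hβ.prod_indicatorChar_bot_top]
    exact congrArg₂ (fun x y : R => evenSign ht * x - evenSign ht' * y)
      (hα.indicatorChar_odd_mul_bot_apply z _ _) (hβ.indicatorChar_odd_mul_bot_apply z _ _)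
  rw [← sub_eq_zero, ← hL]
  refine apply_conj_prod_eq_zero E O L (fun n hn y => ?_) p q N
  rw [← one_mul (List.prod _), ← O.map_zero_eq_one, hL, twoAlphabetSum_neg_left,
    twoAlphabetSum_neg_left, ← mul_assoc, ← mul_assoc, ← Int.cast_mul, ← Int.cast_mul,
    evenSign_mul_self, evenSign_mul_self, heq n hn, sub_self]

theorem IsRanked.evenSign_eq (hα : IsRanked ht) (hβ : IsRanked ht')
    (heq : ∀ N, 1 ≤ N → ∀ y : ℕ → ℚ, twoAlphabetSum ht y y N = twoAlphabetSum ht' y y N) :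
    evenSign ht = evenSign ht' := by
  let N := Finset.univ.sup ht + 1
  have hpos : 0 < twoAlphabetSum ht (1 : ℕ → ℚ) 1 N :=
    hα.twoAlphabetSum_one_pos fun v => Nat.lt_succ_of_le (Finset.le_sup (Finset.mem_univ v))
  have hsign := hα.evenSign_mul_twoAlphabetSum_eq hβ heq 1 1 N
  rw [← heq N (Nat.succ_pos _)] at hsign
  exact Int.cast_injective (mul_right_cancel₀ hpos.ne' hsign)

theorem IsRanked.twoAlphabetSum_eq (hα : IsRanked ht) (hβ : IsRanked ht')
    (heq : ∀ N, 1 ≤ N → ∀ y : ℕ → ℚ, twoAlphabetSum ht y y N = twoAlphabetSum ht' y y N)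
    (p q : ℕ → ℚ) (N : ℕ) : twoAlphabetSum ht p q N = twoAlphabetSum ht' p q N := by
  have hsign := hα.evenSign_mul_twoAlphabetSum_eq hβ heq p q N
  rw [← hα.evenSign_eq hβ heq] at hsign
  refine mul_left_cancel₀ ?_ hsign
  exact Int.cast_ne_zero.2 (left_ne_zero_of_mul_eq_one (evenSign_mul_self ht))

end Comparison

/-- If two finite ranked posets have the same generating functions
`F^(N)` for every `N ≥ 1`, then they have the same generating functions `N^(m)` for
every `m ≥ 0`. -/
theorem stmt12 (α β : Type) [Fintype α] [PartialOrder α] [Fintype β] [PartialOrder β]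
    (ht : α → ℕ) (ht' : β → ℕ) (hα : IsRanked ht) (hβ : IsRanked ht')
    (heq : ∀ N : ℕ, 1 ≤ N → FP α ht N = FP β ht' N) :
    ∀ m : ℕ, NP α ht m = NP β ht' m := by
  intro m
  refine MvPolynomial.funext fun g => ?_
  rw [eval_NP, eval_NP]
  refine hα.twoAlphabetSum_eq hβ (fun N hN y => ?_) _ _ _
  rw [← eval_FP, ← eval_FP, heq N hN]
end
end
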